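/- arXiv:2310.00361 — 5 statements merged into one kernel-verified Lean document; each statement's English description precedes it below -/
import Mathlib

section
/- Let H = H_S ⊗ H_{S̄} be a bipartite space, let S_h̄ be a proper tensor factor of H_{S̄}, and set S_w = S ⊗ S_h̄ with dim S_w = d_w. Let μ be the normalized Haar probability measure on U(d_w), and for w ∈ U(d_w) let w̃ denote w acting on the factor S_w tensored with the identity on the rest of H. Then for arbitrary operators A, B on H, ∫ (Tr[Tr_{S̄}[w̃ A w̃†]·Tr_{S̄}[B]])² dμ(w) = (1/(d_w²−1))·((d_w/dim S)²·Tr[A]²·Tr[B]² + (d_w/dim S)·Tr[(Tr_{S̄_w}[A])²]·Tr[(Tr_{S̄}[B])²]) − (1/(d_w(d_w²−1)))·((d_w/dim S)·Tr[A]²·Tr[(Tr_{S̄}[B])²] + (d_w/dim S)²·Tr[(Tr_{S̄_w}[A])²]·Tr[B]²), where Tr_{S̄_w} is the partial trace over the tensor complement of S_w in H. -/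
/-!
With `X = Tr_{S̄_w} A` and `Y = Tr_{S̄} B ⊗ I` on `S_w`, the integrand is `(Tr (w X w† Y))²`
(`ptraceRight_kronecker_conj`, `trace_ptraceSbar_mul`), so the claim reduces to the second-moment
formula of the Haar measure on `U(d)`, `integral_trace_sq`.

For that formula put `Z = w X w†` and consider the moments `∫ Z i j * Z k l`. Left invariance of the
measure means that replacing `Z` by `u Z u†` changes nothing, for every unitary `u`. Three kinds
of `u` suffice to determine the moments up to two constants `a`, `b`:
* a diagonal phase shows that a moment vanishes unless the row indices `{i, k}` and the column
  indices `{j, l}` agree as multisets (`entryMoment_eq_zero`);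
* permutation matrices show that it depends only on the pattern of equal indices
  (`entryMoment_perm`);
* a rational reflection in a coordinate plane gives
  `∫ Z p p * Z p p = ∫ Z p p * Z q q + ∫ Z p q * Z q p` (`entryMoment_diag`).

Hence `∫ Z i j * Z k l = a δ_ij δ_kl + b δ_il δ_jk` (`entryMoment_eq`). Since `Tr Z = Tr X` and
`Tr Z² = Tr X²` for every `w`, contracting indices yields `(Tr X)² = a d² + b d` and
`Tr X² = a d + b d²`, which determine `a` and `b` because `d > 1`.
-/


open MeasureTheory Matrix Kronecker

noncomputable instance {ι : Type*} [Fintype ι] [DecidableEq ι] :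
    MeasurableSpace (Matrix.unitaryGroup ι ℂ) := borel _

instance {ι : Type*} [Fintype ι] [DecidableEq ι] :
    BorelSpace (Matrix.unitaryGroup ι ℂ) := ⟨rfl⟩

/-- Partial trace over the second (right) tensor factor. -/
noncomputable def ptraceRight {α β : Type*} [Fintype β] (A : Matrix (α × β) (α × β) ℂ) :
    Matrix α α ℂ :=
  Matrix.of fun i j => ∑ k : β, A (i, k) (j, k)

/-- For `H = (H_S ⊗ H_{h̄}) ⊗ H_r` with `H_{S̄} = H_{h̄} ⊗ H_r`, the partial trace
`Tr_{S̄}` over `H_{h̄}` and `H_r`, keeping `H_S`. -/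
noncomputable def ptraceSbar {s hb r : Type*} [Fintype hb] [Fintype r]
    (A : Matrix ((s × hb) × r) ((s × hb) × r) ℂ) : Matrix s s ℂ :=
  Matrix.of fun i j => ∑ b : hb, ∑ k : r, A ((i, b), k) ((j, b), k)

/-! ### Second moments of the Haar measure -/

section SecondMoment

variable {ι : Type*} [Fintype ι] [DecidableEq ι]

instance instCompactSpaceUnitaryGroup : CompactSpace (Matrix.unitaryGroup ι ℂ) := by
  refine isCompact_iff_compactSpace.mp ?_
  have hball : IsCompact (Set.univ.pi fun _ : ι => Set.univ.pi fun _ : ι =>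
      Metric.closedBall (0 : ℂ) 1) :=
    isCompact_univ_pi fun _ => isCompact_univ_pi fun _ => isCompact_closedBall _ _
  refine hball.of_isClosed_subset (isClosed_unitary (R := Matrix ι ι ℂ)) fun U hU i _ j _ => ?_
  simpa using entry_norm_bound_of_unitary hU i j

/-- The conjugate `w X w†` of `X` by a unitary `w`. -/
noncomputable def unitaryConj (X : Matrix ι ι ℂ) (w : Matrix.unitaryGroup ι ℂ) : Matrix ι ι ℂ :=
  (w : Matrix ι ι ℂ) * X * star (w : Matrix ι ι ℂ)

lemma unitaryConj_mul (X : Matrix ι ι ℂ) (u w : Matrix.unitaryGroup ι ℂ) :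
    unitaryConj X (u * w) =
      (u : Matrix ι ι ℂ) * unitaryConj X w * star (u : Matrix ι ι ℂ) := by
  simp [unitaryConj, Matrix.mul_assoc]

lemma trace_unitaryConj (X : Matrix ι ι ℂ) (w : Matrix.unitaryGroup ι ℂ) :
    (unitaryConj X w).trace = X.trace := by
  rw [unitaryConj, Matrix.trace_mul_comm, ← Matrix.mul_assoc, Unitary.coe_star_mul_self,
    Matrix.one_mul]

lemma unitaryConj_mul_self (X : Matrix ι ι ℂ) (w : Matrix.unitaryGroup ι ℂ) :
    unitaryConj X w * unitaryConj X w = unitaryConj (X * X) w := by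
  have h : star (w : Matrix ι ι ℂ) * (w : Matrix ι ι ℂ) = 1 := Unitary.coe_star_mul_self w
  calc unitaryConj X w * unitaryConj X w
      = (w : Matrix ι ι ℂ) * X * (star (w : Matrix ι ι ℂ) * (w : Matrix ι ι ℂ)) * X *
          star (w : Matrix ι ι ℂ) := by simp only [unitaryConj, Matrix.mul_assoc]
    _ = unitaryConj (X * X) w := by rw [h]; simp [unitaryConj, Matrix.mul_assoc]

lemma continuous_unitaryConj (X : Matrix ι ι ℂ) (i j : ι) :
    Continuous fun w : Matrix.unitaryGroup ι ℂ => unitaryConj X w i j := by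
  have h : Continuous fun w : Matrix.unitaryGroup ι ℂ => unitaryConj X w := by
    unfold unitaryConj
    exact (continuous_subtype_val.mul continuous_const).mul continuous_subtype_val.star
  exact h.matrix_elem i j

variable (μ : Measure (Matrix.unitaryGroup ι ℂ)) [μ.IsHaarMeasure]

lemma integrable_entries (X : Matrix ι ι ℂ) (i j k l : ι) :
    Integrable (fun w => unitaryConj X w i j * unitaryConj X w k l) μ :=
  ((continuous_unitaryConj X i j).mul (continuous_unitaryConj X k l)).integrable_of_hasCompactSupport
    (HasCompactSupport.of_compactSpace _)

/-- The second moments `∫ Z i j * Z k l` of the entries of `Z = w X w†` for Haar-distributed `w`. -/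
noncomputable def entryMoment (X : Matrix ι ι ℂ) (i j k l : ι) : ℂ :=
  ∫ w, unitaryConj X w i j * unitaryConj X w k l ∂μ

lemma entryMoment_eq_conj (X : Matrix ι ι ℂ) (u : Matrix.unitaryGroup ι ℂ) (i j k l : ι) :
    entryMoment μ X i j k l =
      ∫ w, ((u : Matrix ι ι ℂ) * unitaryConj X w * star (u : Matrix ι ι ℂ)) i j *
        ((u : Matrix ι ι ℂ) * unitaryConj X w * star (u : Matrix ι ι ℂ)) k l ∂μ := by
  rw [entryMoment, ← integral_mul_left_eq_self _ u]
  simp only [unitaryConj_mul]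

lemma entryMoment_phase (X : Matrix ι ι ℂ) (θ : ι → ℂ) (hθ : ∀ i, θ i * star (θ i) = 1)
    (i j k l : ι) :
    entryMoment μ X i j k l =
      θ i * star (θ j) * θ k * star (θ l) * entryMoment μ X i j k l := by
  have hu : Matrix.diagonal θ ∈ Matrix.unitaryGroup ι ℂ := by
    rw [Matrix.mem_unitaryGroup_iff, Matrix.star_eq_conjTranspose, Matrix.diagonal_conjTranspose,
      Matrix.diagonal_mul_diagonal, ← Matrix.diagonal_one]
    congr 1
    funext i
    exact hθ i
  conv_lhs => rw [entryMoment_eq_conj μ X ⟨_, hu⟩]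
  rw [entryMoment, ← integral_const_mul]
  congr 1
  funext w
  simp only [Matrix.star_eq_conjTranspose, Matrix.diagonal_conjTranspose, Matrix.mul_diagonal,
    Matrix.diagonal_mul, Pi.star_apply]
  ring

/-- Invariance under diagonal phases kills every moment whose row and column indices do not agree
as multisets. -/
lemma entryMoment_eq_zero (X : Matrix ι ι ℂ) (i j k l : ι)
    (h₁ : ¬ (i = j ∧ k = l)) (h₂ : ¬ (i = l ∧ j = k)) : entryMoment μ X i j k l = 0 := by
  have hph : ∀ p : ι, entryMoment μ X i j k l =
      (if i = p then Complex.I else 1) * (if j = p then -Complex.I else 1) *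
      (if k = p then Complex.I else 1) * (if l = p then -Complex.I else 1) *
        entryMoment μ X i j k l := by
    intro p
    have := entryMoment_phase μ X (fun a => if a = p then Complex.I else 1)
      (by intro a; by_cases ha : a = p <;> simp [ha]) i j k l
    simpa only [apply_ite star, star_one, Complex.star_def, Complex.conj_I, map_one] using this
  generalize entryMoment μ X i j k l = m at hph
  by_contra hm
  have hph' : ∀ p : ι, 1 =
      (if i = p then Complex.I else 1) * (if j = p then -Complex.I else 1) *
      (if k = p then Complex.I else 1) * (if l = p then -Complex.I else 1) := by
    intro p
    refine mul_right_cancel₀ hm ?_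
    rw [one_mul]
    exact hph p
  have hi := hph' i
  have hk := hph' k
  have hI := Complex.I_mul_I
  -- `p = i` and `p = k` already force the two multisets to coincide.
  split_ifs at hi hk <;> first
    | (simp [Complex.ext_iff] at hi; done)
    | (simp [Complex.ext_iff] at hk; done)
    | grind

lemma entryMoment_perm (X : Matrix ι ι ℂ) (σ : Equiv.Perm ι) (i j k l : ι) :
    entryMoment μ X i j k l = entryMoment μ X (σ i) (σ j) (σ k) (σ l) := by
  have hu : σ.permMatrix ℂ ∈ Matrix.unitaryGroup ι ℂ := by
    rw [Matrix.mem_unitaryGroup_iff, Matrix.star_eq_conjTranspose, Matrix.conjTranspose_permMatrix,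
      ← Matrix.permMatrix_mul]
    simp
  rw [entryMoment_eq_conj μ X ⟨_, hu⟩]
  have h : ∀ (Z : Matrix ι ι ℂ) (a b : ι),
      (σ.permMatrix ℂ * Z * star (σ.permMatrix ℂ)) a b = Z (σ a) (σ b) := by
    intro Z a b
    simp [Matrix.mul_apply, Matrix.star_apply, Equiv.Perm.permMatrix, PEquiv.toMatrix_apply,
      apply_ite]
  simp only [h]
  rfl

lemma exists_perm_map_pair {κ : Type*} [DecidableEq κ] {p q i j : κ} (hpq : p ≠ q)
    (hij : i ≠ j) : ∃ σ : Equiv.Perm κ, σ p = i ∧ σ q = j := by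
  have hq : Equiv.swap p i q ≠ i := by
    intro h
    have := congrArg (Equiv.swap p i) h
    simp at this
    exact hpq this.symm
  refine ⟨Equiv.swap (Equiv.swap p i q) j * Equiv.swap p i, ?_, ?_⟩
  · simp [Equiv.swap_apply_of_ne_of_ne hq.symm hij]
  · simp

/-- Invariance under the reflection with block `(3, -4; -4, -3) / 5` in the plane of `p` and `q`
expresses the moment of `Z p p` squared through the two mixed ones. -/
lemma entryMoment_diag (X : Matrix ι ι ℂ) {p q : ι} (hpq : p ≠ q) :
    entryMoment μ X p p p p = entryMoment μ X p p q q + entryMoment μ X p q q p := by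
  set v : ι → ℂ := Pi.single p 1 + Pi.single q 2 with hv
  have hvv : v ⬝ᵥ v = 5 := by
    simp [hv, dotProduct_add, hpq, hpq.symm]
    norm_num
  have hvs : star v = v := by
    funext a
    simp only [hv, Pi.star_apply, Pi.add_apply, Pi.single_apply]
    split_ifs <;> simp
  set u : Matrix ι ι ℂ := 1 - (2 / 5 : ℂ) • vecMulVec v v with hu'
  have hstar : star u = u := by
    rw [hu', Matrix.star_eq_conjTranspose]
    simp [Matrix.conjTranspose_vecMulVec, hvs]
  have hu : u ∈ Matrix.unitaryGroup ι ℂ := by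
    rw [Matrix.mem_unitaryGroup_iff, hstar, hu']
    simp only [sub_mul, mul_sub, Matrix.one_mul, Matrix.mul_one, smul_mul_assoc, mul_smul_comm,
      Matrix.vecMulVec_mul_vecMulVec, hvv, smul_smul, Matrix.vecMulVec_smul]
    module
  have hrow : ∀ a, u p a = (if a = p then 3 / 5 else 0) + (if a = q then -4 / 5 else 0) := by
    intro a
    by_cases hap : a = p
    · subst hap
      simp [hu', hv, vecMulVec_apply, hpq]
      norm_num
    · by_cases haq : a = q
      · subst haq
        simp [hu', hv, vecMulVec_apply, hpq, hap]
        norm_num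
      · simp [hu', hv, vecMulVec_apply, hpq, hap, haq, Ne.symm hap]
  have hcol : ∀ a, u a p = (if a = p then 3 / 5 else 0) + (if a = q then -4 / 5 else 0) := by
    intro a
    rw [← hrow a]
    simp [hu', vecMulVec_apply, Matrix.one_apply, eq_comm, mul_comm]
  have hZ : ∀ Z : Matrix ι ι ℂ, (u * Z * star u) p p =
      (9 * Z p p - 12 * Z p q - 12 * Z q p + 16 * Z q q) / 25 := by
    intro Z
    rw [hstar]
    simp [Matrix.mul_apply, hrow, hcol, add_mul, mul_add, Finset.sum_add_distrib]
    ring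
  have h := entryMoment_eq_conj μ X ⟨u, hu⟩ p p p p
  simp only [hZ] at h
  -- Expanding the square gives a combination of sixteen moments, of which six survive.
  have hint := integrable_entries μ X
  have hexp : ∀ w : Matrix.unitaryGroup ι ℂ,
      (9 * unitaryConj X w p p - 12 * unitaryConj X w p q - 12 * unitaryConj X w q p +
          16 * unitaryConj X w q q) / 25 *
        ((9 * unitaryConj X w p p - 12 * unitaryConj X w p q - 12 * unitaryConj X w q p +
          16 * unitaryConj X w q q) / 25) =
      ∑ a : Fin 2 × Fin 2, ∑ b : Fin 2 × Fin 2,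
        (![![9 / 25, -12 / 25], ![-12 / 25, 16 / 25]] a.1 a.2 *
          ![![9 / 25, -12 / 25], ![-12 / 25, 16 / 25]] b.1 b.2) *
        (unitaryConj X w (![p, q] a.1) (![p, q] a.2) *
          unitaryConj X w (![p, q] b.1) (![p, q] b.2)) := by
    intro w
    simp [Fintype.sum_prod_type]
    ring
  simp only [hexp] at h
  rw [integral_finsetSum _ fun a _ => integrable_finsetSum _ fun b _ => (hint _ _ _ _).const_mul _]
    at h
  simp_rw [integral_finsetSum _ fun b _ => (hint _ _ _ _).const_mul _, integral_const_mul] at h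
  change _ = ∑ a : Fin 2 × Fin 2, ∑ b : Fin 2 × Fin 2, _ * entryMoment μ X _ _ _ _ at h
  have hsw := fun a b c e => entryMoment_perm μ X (Equiv.swap p q) a b c e
  have e1 := hsw q q q q
  have e2 := hsw q q p p
  have e3 := hsw q p p q
  simp only [Equiv.swap_apply_left, Equiv.swap_apply_right] at e1 e2 e3
  have hz : ∀ a b c e, _ → _ → _ := entryMoment_eq_zero μ X
  simp [Fintype.sum_prod_type, e1, e2, e3, hz p p p q, hz p p q p, hz p q p p, hz p q p q,
    hz p q q q, hz q p p p, hz q p q p, hz q p q q, hz q q p q, hz q q q p, hpq, hpq.symm] at h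
  linear_combination (625 / 288 : ℂ) * h

/-- The moment tensor is a combination of the two permutation tensors: two-transitivity of the
permutations reduces each nonzero moment to `(p, p, q, q)`, `(p, q, q, p)` or `(p, p, p, p)`, and the
last one is the sum of the other two. -/
lemma entryMoment_eq (X : Matrix ι ι ℂ) {p q : ι} (hpq : p ≠ q) (i j k l : ι) :
    entryMoment μ X i j k l =
      (if i = j ∧ k = l then entryMoment μ X p p q q else 0) +
        (if i = l ∧ j = k then entryMoment μ X p q q p else 0) := by
  by_cases hij : i = j
  · subst hij
    by_cases hkl : k = l
    · subst hkl
      by_cases hik : i = k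
      · subst hik
        have h := entryMoment_perm μ X (Equiv.swap p i) p p p p
        simp only [Equiv.swap_apply_left] at h
        simp [← h, entryMoment_diag μ X hpq]
      · obtain ⟨σ, h1, h2⟩ := exists_perm_map_pair hpq hik
        simp [hik, entryMoment_perm μ X σ p p q q, h1, h2]
    · rw [entryMoment_eq_zero μ X i i k l (by tauto) (by rintro ⟨h1, h2⟩; exact hkl (h2 ▸ h1))]
      rw [if_neg (by tauto), if_neg (by rintro ⟨h1, h2⟩; exact hkl (h2 ▸ h1)), add_zero]
  · by_cases h : i = l ∧ j = k
    · obtain ⟨rfl, rfl⟩ := h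
      obtain ⟨σ, h1, h2⟩ := exists_perm_map_pair hpq hij
      simp [hij, entryMoment_perm μ X σ p q q p, h1, h2]
    · rw [entryMoment_eq_zero μ X i j k l (by tauto) h, if_neg (by tauto), if_neg h, add_zero]

lemma integral_sum_entries (X : Matrix ι ι ℂ) (c : ι → ι → ι → ι → ℂ) :
    ∫ w, ∑ i, ∑ j, ∑ k, ∑ l, c i j k l * (unitaryConj X w i j * unitaryConj X w k l) ∂μ =
      ∑ i, ∑ j, ∑ k, ∑ l, c i j k l * entryMoment μ X i j k l := by
  have hint := integrable_entries μ X
  have h1 : ∀ i j k l, Integrable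
      (fun w => c i j k l * (unitaryConj X w i j * unitaryConj X w k l)) μ :=
    fun i j k l => (hint i j k l).const_mul _
  have h2 := fun i j k => integrable_finsetSum Finset.univ fun l _ => h1 i j k l
  have h3 := fun i j => integrable_finsetSum Finset.univ fun k _ => h2 i j k
  have h4 := fun i => integrable_finsetSum Finset.univ fun j _ => h3 i j
  rw [integral_finsetSum _ fun i _ => h4 i]
  refine Finset.sum_congr rfl fun i _ => ?_
  rw [integral_finsetSum _ fun j _ => h3 i j]
  refine Finset.sum_congr rfl fun j _ => ?_
  rw [integral_finsetSum _ fun k _ => h2 i j k]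
  refine Finset.sum_congr rfl fun k _ => ?_
  rw [integral_finsetSum _ fun l _ => h1 i j k l]
  refine Finset.sum_congr rfl fun l _ => ?_
  rw [integral_const_mul, entryMoment]

lemma integral_sum_entries_eq (X : Matrix ι ι ℂ) {p q : ι} (hpq : p ≠ q)
    (c : ι → ι → ι → ι → ℂ) :
    ∫ w, ∑ i, ∑ j, ∑ k, ∑ l, c i j k l * (unitaryConj X w i j * unitaryConj X w k l) ∂μ =
      entryMoment μ X p p q q * (∑ i, ∑ k, c i i k k) +
        entryMoment μ X p q q p * ∑ i, ∑ j, c i j j i := by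
  rw [integral_sum_entries]
  have h := entryMoment_eq μ X hpq
  generalize entryMoment μ X p p q q = a at h ⊢
  generalize entryMoment μ X p q q p = b at h ⊢
  simp only [h, mul_add, Finset.sum_add_distrib, mul_ite, mul_zero, ite_and, mul_comm a,
    mul_comm b, Finset.sum_mul]
  congr 1 <;> simp

variable [IsProbabilityMeasure μ]

/-- The second-moment formula for the Haar measure on the unitary group, in trace form. -/
lemma integral_trace_sq (hd : 1 < Fintype.card ι) (X Y : Matrix ι ι ℂ) :
    ∫ w, ((unitaryConj X w * Y).trace) ^ 2 ∂μ =
      (1 / ((Fintype.card ι : ℂ) ^ 2 - 1)) *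
          (X.trace ^ 2 * Y.trace ^ 2 + (X * X).trace * (Y * Y).trace) -
        (1 / ((Fintype.card ι : ℂ) * ((Fintype.card ι : ℂ) ^ 2 - 1))) *
          (X.trace ^ 2 * (Y * Y).trace + (X * X).trace * Y.trace ^ 2) := by
  obtain ⟨p, q, hpq⟩ := Fintype.one_lt_card_iff.mp hd
  have key := fun c => integral_sum_entries_eq μ X hpq c
  generalize entryMoment μ X p p q q = a at key
  generalize entryMoment μ X p q q p = b at key
  have hsq : ∀ Y : Matrix ι ι ℂ, ∫ w, ((unitaryConj X w * Y).trace) ^ 2 ∂μ =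
      a * Y.trace ^ 2 + b * (Y * Y).trace := by
    intro Y
    have h := key fun i j k l => Y j i * Y l k
    have e : ∀ w : Matrix.unitaryGroup ι ℂ, ((unitaryConj X w * Y).trace) ^ 2 =
        ∑ i, ∑ j, ∑ k, ∑ l, (Y j i * Y l k) * (unitaryConj X w i j * unitaryConj X w k l) := by
      intro w
      simp only [Matrix.trace, Matrix.diag_apply, Matrix.mul_apply, sq]
      rw [Finset.sum_mul]
      refine Finset.sum_congr rfl fun i _ => ?_
      rw [Finset.sum_mul]
      refine Finset.sum_congr rfl fun j _ => ?_
      rw [Finset.mul_sum]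
      refine Finset.sum_congr rfl fun k _ => ?_
      rw [Finset.mul_sum]
      exact Finset.sum_congr rfl fun l _ => by ring
    simp only [e, h]
    congr 2
    · simp [Matrix.trace, sq, Finset.sum_mul_sum]
    · simp [Matrix.trace, Matrix.mul_apply, mul_comm]
  -- `Y = 1` gives one linear equation for `a` and `b`.
  have h1 : X.trace ^ 2 = a * (Fintype.card ι : ℂ) ^ 2 + b * Fintype.card ι := by
    have h := hsq 1
    simpa [trace_unitaryConj] using h
  -- The moment of `Tr (Z * Z)` gives a second one.
  have h2 : (X * X).trace = a * Fintype.card ι + b * (Fintype.card ι : ℂ) ^ 2 := by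
    have h := key fun i j k l => (if l = i then 1 else 0) * (if k = j then 1 else 0)
    have e : ∀ w : Matrix.unitaryGroup ι ℂ,
        ∑ i, ∑ j, ∑ k, ∑ l, (((if l = i then 1 else 0) * (if k = j then 1 else 0) : ℂ) *
          (unitaryConj X w i j * unitaryConj X w k l)) = (X * X).trace := by
      intro w
      rw [← trace_unitaryConj (X * X) w, ← unitaryConj_mul_self]
      simp [Matrix.trace, Matrix.mul_apply]
    simp only [e] at h
    simpa [sq] using h
  have hd1 : (1 : ℝ) < Fintype.card ι := by exact_mod_cast hd
  have hd0 : (Fintype.card ι : ℂ) ≠ 0 := by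
    exact_mod_cast (by omega : Fintype.card ι ≠ 0)
  have hd2 : (Fintype.card ι : ℂ) ^ 2 - 1 ≠ 0 := by
    have : (Fintype.card ι : ℝ) ^ 2 - 1 ≠ 0 := by nlinarith
    exact_mod_cast this
  rw [hsq, h1, h2]
  field_simp
  ring

end SecondMoment

/-! ### Partial traces -/

section PartialTrace

variable {s hb r : Type*} [Fintype s] [Fintype hb] [Fintype r]

/-- Conjugation on the first tensor factor commutes with the partial trace over the second. -/
lemma ptraceRight_kronecker_conj [DecidableEq s] [DecidableEq hb] [DecidableEq r]
    (w : Matrix.unitaryGroup (s × hb) ℂ)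
    (A : Matrix ((s × hb) × r) ((s × hb) × r) ℂ) :
    ptraceRight (((w : Matrix (s × hb) (s × hb) ℂ) ⊗ₖ (1 : Matrix r r ℂ)) * A *
      ((star (w : Matrix (s × hb) (s × hb) ℂ)) ⊗ₖ (1 : Matrix r r ℂ))) =
      unitaryConj (ptraceRight A) w := by
  ext i j
  simp only [ptraceRight, unitaryConj, Matrix.of_apply, Matrix.mul_apply, Fintype.sum_prod_type,
    Matrix.kroneckerMap_apply, Matrix.one_apply, mul_ite, ite_mul, mul_one, mul_zero, zero_mul,
    Finset.sum_ite_eq, Finset.sum_ite_eq', Finset.mem_univ, if_true, Finset.sum_mul,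
    Finset.mul_sum]
  rw [Finset.sum_comm]
  refine Finset.sum_congr rfl fun a _ => ?_
  rw [Finset.sum_comm]
  refine Finset.sum_congr rfl fun b _ => ?_
  rw [Finset.sum_comm]
  refine Finset.sum_congr rfl fun c _ => ?_
  rw [Finset.sum_comm]

/-- The partial trace is adjoint to tensoring with the identity. -/
lemma trace_ptraceSbar_mul [DecidableEq hb] (C : Matrix ((s × hb) × r) ((s × hb) × r) ℂ)
    (D : Matrix s s ℂ) :
    (ptraceSbar C * D).trace = (ptraceRight C * (D ⊗ₖ (1 : Matrix hb hb ℂ))).trace := by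
  simp only [ptraceSbar, ptraceRight, Matrix.trace, Matrix.diag_apply, Matrix.of_apply,
    Matrix.mul_apply, Fintype.sum_prod_type, Matrix.kroneckerMap_apply, Matrix.one_apply, mul_ite,
    mul_one, mul_zero, Finset.sum_ite_eq', Finset.mem_univ, if_true, Finset.sum_mul]
  refine Finset.sum_congr rfl fun i _ => ?_
  rw [Finset.sum_comm]

lemma trace_ptraceRight (A : Matrix ((s × hb) × r) ((s × hb) × r) ℂ) :
    (ptraceRight A).trace = A.trace := by
  simp [ptraceRight, Matrix.trace, Fintype.sum_prod_type]

lemma trace_ptraceSbar (A : Matrix ((s × hb) × r) ((s × hb) × r) ℂ) :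
    (ptraceSbar A).trace = A.trace := by
  simp [ptraceSbar, Matrix.trace, Fintype.sum_prod_type]

end PartialTrace

/-- `H = H_S ⊗ H_{S̄}` with `H_{S̄} = H_{h̄} ⊗ H_r`, `H_{h̄}` a proper
tensor factor of `H_{S̄}`, and `S_w = S ⊗ S_{h̄}` of dimension `d_w`.  For the normalized
Haar probability measure `μ` on `U(d_w)`, with `w̃ = w ⊗ I_r`, and arbitrary `A`, `B`:
`∫ (Tr[Tr_{S̄}[w̃ A w̃†]·Tr_{S̄}[B]])² dμ(w)
  = (1/(d_w²−1))·((d_w/dim S)²·Tr[A]²·Tr[B]² + (d_w/dim S)·Tr[(Tr_{S̄_w}[A])²]·Tr[(Tr_{S̄}[B])²])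
    − (1/(d_w(d_w²−1)))·((d_w/dim S)·Tr[A]²·Tr[(Tr_{S̄}[B])²] + (d_w/dim S)²·Tr[(Tr_{S̄_w}[A])²]·Tr[B]²)`. -/
theorem haar_block_integral_sq_trace_ptrace
    (s hb r : Type*) [Fintype s] [Fintype hb] [Fintype r]
    [DecidableEq s] [DecidableEq hb] [DecidableEq r]
    (hproper : 1 < Fintype.card r) (hdw : 1 < Fintype.card (s × hb))
    (μ : Measure (Matrix.unitaryGroup (s × hb) ℂ))
    [μ.IsHaarMeasure] [IsProbabilityMeasure μ]
    (A B : Matrix ((s × hb) × r) ((s × hb) × r) ℂ) :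
    ∫ w : Matrix.unitaryGroup (s × hb) ℂ,
        ((ptraceSbar (((w : Matrix (s × hb) (s × hb) ℂ) ⊗ₖ (1 : Matrix r r ℂ)) * A *
              ((star (w : Matrix (s × hb) (s × hb) ℂ)) ⊗ₖ (1 : Matrix r r ℂ))) *
          ptraceSbar B).trace) ^ 2 ∂μ
      = (1 / ((Fintype.card (s × hb) : ℂ) ^ 2 - 1)) *
          (((Fintype.card (s × hb) : ℂ) / (Fintype.card s : ℂ)) ^ 2 *
              A.trace ^ 2 * B.trace ^ 2 +
            ((Fintype.card (s × hb) : ℂ) / (Fintype.card s : ℂ)) *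
              (ptraceRight A * ptraceRight A).trace * (ptraceSbar B * ptraceSbar B).trace)
        - (1 / ((Fintype.card (s × hb) : ℂ) * ((Fintype.card (s × hb) : ℂ) ^ 2 - 1))) *
          (((Fintype.card (s × hb) : ℂ) / (Fintype.card s : ℂ)) *
              A.trace ^ 2 * (ptraceSbar B * ptraceSbar B).trace +
            ((Fintype.card (s × hb) : ℂ) / (Fintype.card s : ℂ)) ^ 2 *
              (ptraceRight A * ptraceRight A).trace * B.trace ^ 2) := by
  have hs : (Fintype.card s : ℂ) ≠ 0 := by
    have : Fintype.card s ≠ 0 := by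
      intro h
      simp [Fintype.card_prod, h] at hdw
    exact_mod_cast this
  -- `d_w / dim S` is the dimension of the factor `H_{h̄}`.
  have hcard : (Fintype.card (s × hb) : ℂ) / (Fintype.card s : ℂ) = Fintype.card hb := by
    rw [Fintype.card_prod, Nat.cast_mul]
    field_simp
  simp only [trace_ptraceSbar_mul (C := _ * A * _), ptraceRight_kronecker_conj]
  rw [integral_trace_sq μ hdw, ← Matrix.mul_kronecker_mul, Matrix.trace_kronecker,
    Matrix.trace_kronecker, trace_ptraceRight, trace_ptraceSbar, hcard, Matrix.one_mul,
    Matrix.trace_one]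
  ring
end

section
/- Consider an n-qubit system, a subset S_W of m qubits, and a subset S_κ ⊆ S_W of n_κ qubits. Let W and W′ be independent random unitaries, each distributed according to the normalized Haar probability measure on U(2^m), acting (as W̃, W̃′) on the qubits of S_W and as the identity elsewhere, and let ρ, ρ′ be density matrices on n qubits. Define the random variable k = Tr[Tr_{S̄_κ}[W̃ ρ W̃†]·Tr_{S̄_κ}[W̃′ ρ′ W̃′†]]. Then Var[k] = (2^{2m}·(2^{2n_κ} − 1) / ((2^{2m} − 1)²·2^{2n_κ})) · (Tr[(Tr_{S̄_W}[ρ])²] − 2^{−m}) · (Tr[(Tr_{S̄_W}[ρ′])²] − 2^{−m}). In particular the variance vanishes exactly when one of the reduced states Tr_{S̄_W}[ρ], Tr_{S̄_W}[ρ′] is the completely mixed state on S_W. -/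
/-!
Tracing out the qubits outside `S_W` first, the kernel becomes
`Tr[Tr_R(U A U†) Tr_R(U' A' U'†)]`, where `A`, `A'` are the reduced states on `S_W`, `U`, `U'` are
independent Haar unitaries, and the basis of `S_W` is split as `K × R` with `K` the basis of `S_κ`
(`ptraceCompl_conj`, `ptraceCompl_trans`). Replacing `A` and `A'` by their traceless parts `X`, `X'`
only subtracts the constant `1/|K|` (`ker_tless`), and the remaining kernel has mean zero, so the
variance is the mean of its square.

The mean of the square factorises over the two unitaries into second moments
`E[Y_ij Y_kl]` of `Y = U X U†`. With `d` the dimension, these are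
`Tr(X²)/(d² - 1) · (δ_il δ_kj - δ_ij δ_kl / d)` (`mom2_eq`). This is proved by hand from left
invariance of the Haar measure: phase matrices kill every moment except `E[Y_pp Y_qq]`,
`E[Y_pq Y_qp]` and `E[Y_pp²]`, permutation matrices make each of these independent of `p ≠ q`, and
the unitary `(1 + i S)/√2` with `S` a transposition gives
`E[Y_pp²] = E[Y_pp Y_qq] + E[Y_pq Y_qp]`. The two identities `tr Y = 0` and `tr Y² = tr X²` then
determine the three numbers.

Summing over `R` leaves a multiple of the traceless swap tensor on `K ⊗ K`, whose square
contributes `|K|² - 1` (`integral_ptr_mul`, `sum_swap_sq`). Finally `Tr(A²) - 1/d` is the squared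
Frobenius norm of `X`, so it vanishes exactly when `A` is completely mixed (`purity_eq_iff`).
-/

open MeasureTheory Matrix ComplexOrder

/-- Computational basis states of an `n`-qubit system. -/
abbrev QubitBasis (n : ℕ) := Fin n → Fin 2

/-- Combine an assignment on a subset `S` of qubits with one on its complement. -/
def mergeQ {n : ℕ} (S : Finset (Fin n)) (a : {i : Fin n // i ∈ S} → Fin 2)
    (b : {i : Fin n // i ∉ S} → Fin 2) : QubitBasis n :=
  fun i => if h : i ∈ S then a ⟨i, h⟩ else b ⟨i, h⟩

/-- Partial trace over the qubits outside `S` (i.e. `Tr_{S̄}`), producing an operator on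
the qubits in `S`. -/
noncomputable def ptraceCompl {n : ℕ} (S : Finset (Fin n))
    (A : Matrix (QubitBasis n) (QubitBasis n) ℂ) :
    Matrix ({i : Fin n // i ∈ S} → Fin 2) ({i : Fin n // i ∈ S} → Fin 2) ℂ :=
  Matrix.of fun a b =>
    ∑ c : {i : Fin n // i ∉ S} → Fin 2, A (mergeQ S a c) (mergeQ S b c)

/-- Extend an operator on the qubits in `S` to an `n`-qubit operator acting as the
identity on the qubits outside `S`. -/
noncomputable def embedQ {n : ℕ} (S : Finset (Fin n))
    (W : Matrix ({i : Fin n // i ∈ S} → Fin 2) ({i : Fin n // i ∈ S} → Fin 2) ℂ) :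
    Matrix (QubitBasis n) (QubitBasis n) ℂ :=
  Matrix.of fun x y =>
    (if ∀ i : {i : Fin n // i ∉ S}, x i.1 = y i.1 then (1 : ℂ) else 0) *
      W (fun i => x i.1) (fun i => y i.1)


namespace HaarBlock

set_option linter.unusedSectionVars false

/-! ### Conjugation orbits of the unitary group -/

variable {J : Type*} [Fintype J] [DecidableEq J]

/-- The orbit map `U ↦ U X U†` of the conjugation action of the unitary group. -/
noncomputable def conjU (X : Matrix J J ℂ) (U : Matrix.unitaryGroup J ℂ) : Matrix J J ℂ :=
  (U : Matrix J J ℂ) * X * star (U : Matrix J J ℂ)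

lemma conjU_mul (X : Matrix J J ℂ) (V U : Matrix.unitaryGroup J ℂ) :
    conjU X (V * U) = (V : Matrix J J ℂ) * conjU X U * star (V : Matrix J J ℂ) := by
  simp [conjU, Matrix.mul_assoc]

lemma trace_conjU (X : Matrix J J ℂ) (U : Matrix.unitaryGroup J ℂ) :
    (conjU X U).trace = X.trace := by
  rw [conjU, Matrix.trace_mul_comm, ← Matrix.mul_assoc]
  simp

lemma trace_conjU_sq (X : Matrix J J ℂ) (U : Matrix.unitaryGroup J ℂ) :
    (conjU X U * conjU X U).trace = (X * X).trace := by
  have h : conjU X U * conjU X U = conjU (X * X) U := by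
    have h1 : star (U : Matrix J J ℂ) * (U : Matrix J J ℂ) = 1 := by simp
    calc conjU X U * conjU X U
        = (U : Matrix J J ℂ) * X * (star (U : Matrix J J ℂ) * (U : Matrix J J ℂ)) * X *
            star (U : Matrix J J ℂ) := by simp only [conjU, Matrix.mul_assoc]
      _ = _ := by rw [h1]; simp only [conjU, Matrix.mul_assoc, Matrix.one_mul]
  rw [h, trace_conjU]

lemma continuous_conjU (X : Matrix J J ℂ) (i j : J) : Continuous fun U => conjU X U i j := by
  have h : Continuous fun U : Matrix.unitaryGroup J ℂ => conjU X U := by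
    unfold conjU
    exact (continuous_subtype_val.mul continuous_const).mul continuous_subtype_val.star
  exact h.matrix_elem i j

/-- Entries of a unitary matrix have modulus at most one, so entries of `U X U†` are bounded
uniformly in `U`. -/
lemma norm_conjU_le (X : Matrix J J ℂ) (U : Matrix.unitaryGroup J ℂ) (i j : J) :
    ‖conjU X U i j‖ ≤ ∑ k, ∑ l, ‖X l k‖ := by
  have hU := fun i j => entry_norm_bound_of_unitary U.2 i j
  simp only [conjU, Matrix.mul_apply, Finset.sum_mul]
  refine (norm_sum_le _ _).trans (Finset.sum_le_sum fun k _ => ?_)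
  refine (norm_sum_le _ _).trans (Finset.sum_le_sum fun l _ => ?_)
  rw [norm_mul, norm_mul, Matrix.star_apply, norm_star]
  have h1 := hU i l
  have h2 := hU j k
  calc _ ≤ 1 * ‖X l k‖ * 1 := by gcongr
    _ = _ := by ring

/-! ### First and second Haar moments -/

section moments

variable (μ : Measure (Matrix.unitaryGroup J ℂ)) [μ.IsHaarMeasure] [IsProbabilityMeasure μ]

lemma integrable_conjU (X : Matrix J J ℂ) (i j : J) : Integrable (fun U => conjU X U i j) μ :=
  Integrable.of_bound (continuous_conjU X i j).measurable.aestronglyMeasurable _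
    (Filter.Eventually.of_forall fun U => norm_conjU_le X U i j)

lemma integrable_conjU_mul (X : Matrix J J ℂ) (i j k l : J) :
    Integrable (fun U => conjU X U i j * conjU X U k l) μ := by
  refine Integrable.of_bound
    ((continuous_conjU X i j).mul (continuous_conjU X k l)).measurable.aestronglyMeasurable
    ((∑ k, ∑ l, ‖X l k‖) * (∑ k, ∑ l, ‖X l k‖)) (Filter.Eventually.of_forall fun U => ?_)
  rw [norm_mul]
  have := norm_conjU_le X U i j
  have := norm_conjU_le X U k l
  gcongr

/-- The first moments `E[(U X U†)_{ij}]`. -/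
noncomputable def mom1 (X : Matrix J J ℂ) (i j : J) : ℂ := ∫ U, conjU X U i j ∂μ

/-- The second moments `E[(U X U†)_{ij} (U X U†)_{kl}]`. -/
noncomputable def mom2 (X : Matrix J J ℂ) (i j k l : J) : ℂ :=
  ∫ U, conjU X U i j * conjU X U k l ∂μ

lemma mom2_symm (X : Matrix J J ℂ) (i j k l : J) : mom2 μ X i j k l = mom2 μ X k l i j := by
  simp only [mom2, mul_comm]

lemma mom1_inv (X : Matrix J J ℂ) (V : Matrix.unitaryGroup J ℂ) (i j : J) :
    mom1 μ X i j =
      ∫ U, ((V : Matrix J J ℂ) * conjU X U * star (V : Matrix J J ℂ)) i j ∂μ := by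
  rw [mom1, ← integral_mul_left_eq_self _ V]
  simp only [conjU_mul]

/-- Second moments are unchanged when `U X U†` is conjugated by a fixed unitary `V`, by left
invariance of the Haar measure. -/
lemma mom2_inv (X : Matrix J J ℂ) (V : Matrix.unitaryGroup J ℂ) (i j k l : J) :
    mom2 μ X i j k l =
      ∫ U, ((V : Matrix J J ℂ) * conjU X U * star (V : Matrix J J ℂ)) i j *
        ((V : Matrix J J ℂ) * conjU X U * star (V : Matrix J J ℂ)) k l ∂μ := by
  rw [mom2, ← integral_mul_left_eq_self _ V]
  simp only [conjU_mul]

/-- The diagonal unitary with the imaginary unit at position `p` and `1` elsewhere. -/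
noncomputable def phaseU (p : J) : Matrix.unitaryGroup J ℂ :=
  ⟨Matrix.diagonal fun x => if x = p then Complex.I else 1, by
    rw [Matrix.mem_unitaryGroup_iff, Matrix.star_eq_conjTranspose, Matrix.diagonal_conjTranspose,
      Matrix.diagonal_mul_diagonal, ← Matrix.diagonal_one]
    congr 1
    ext x
    by_cases h : x = p <;> simp [h]⟩

/-- The permutation matrix that conjugates `Y` into the matrix with entries `Y (σ i) (σ j)`. -/
noncomputable def permU (σ : Equiv.Perm J) : Matrix.unitaryGroup J ℂ :=
  ⟨Matrix.of fun x y => if σ x = y then 1 else 0, by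
    rw [Matrix.mem_unitaryGroup_iff]
    ext x y
    simp [Matrix.mul_apply, Matrix.one_apply, Matrix.star_apply, apply_ite, eq_comm]⟩

lemma phaseU_conj (p : J) (Y : Matrix J J ℂ) (i j : J) :
    ((phaseU p : Matrix J J ℂ) * Y * star (phaseU p : Matrix J J ℂ)) i j =
      (if i = p then Complex.I else 1) * Y i j * (if j = p then -Complex.I else 1) := by
  simp only [phaseU, Matrix.star_eq_conjTranspose, Matrix.diagonal_conjTranspose,
    Matrix.mul_diagonal, Matrix.diagonal_mul, Pi.star_apply]
  by_cases h : j = p <;> simp [h]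

lemma permU_conj (σ : Equiv.Perm J) (Y : Matrix J J ℂ) (i j : J) :
    ((permU σ : Matrix J J ℂ) * Y * star (permU σ : Matrix J J ℂ)) i j = Y (σ i) (σ j) := by
  simp [permU, Matrix.mul_apply, Matrix.star_apply, apply_ite]

/-- The unitary `(1 + i S) / √2`, where `S` is the transposition of `p` and `q`. It mixes the
basis vectors `p` and `q` with equal weights. -/
noncomputable def mixU (p q : J) : Matrix.unitaryGroup J ℂ :=
  ⟨((√2 : ℝ) : ℂ)⁻¹ • (1 + Complex.I • (permU (Equiv.swap p q) : Matrix J J ℂ)), by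
    have hS : star (permU (Equiv.swap p q) : Matrix J J ℂ) = permU (Equiv.swap p q) := by
      ext x y
      simp only [permU, Matrix.star_apply, Matrix.of_apply]
      have : Equiv.swap p q y = x ↔ Equiv.swap p q x = y := by
        rw [Equiv.swap_apply_eq_iff, eq_comm]
      simp [this, apply_ite]
    have hSS : (permU (Equiv.swap p q) : Matrix J J ℂ) * permU (Equiv.swap p q) = 1 := by
      nth_rewrite 2 [← hS]
      simp
    have h2 : ((√2 : ℝ) : ℂ)⁻¹ * ((√2 : ℝ) : ℂ)⁻¹ * 2 = 1 := by
      rw [← mul_inv, ← Complex.ofReal_mul, Real.mul_self_sqrt (by norm_num)]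
      norm_num
    rw [Matrix.mem_unitaryGroup_iff]
    simp only [star_smul, star_add, star_one, hS, Matrix.smul_mul, Matrix.mul_smul, smul_smul,
      add_mul, mul_add, hSS, Matrix.one_mul, Matrix.mul_one]
    ext x y
    by_cases h : x = y
    · simp [Matrix.one_apply, h]
      linear_combination h2 - (((√2 : ℝ) : ℂ)⁻¹ * ((√2 : ℝ) : ℂ)⁻¹) * Complex.I_sq
    · simp [h]
      ring⟩

lemma mixU_conj (p q : J) (Y : Matrix J J ℂ) :
    ((mixU p q : Matrix J J ℂ) * Y * star (mixU p q : Matrix J J ℂ)) p p =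
      (Y p p + Y q q + Complex.I * Y q p - Complex.I * Y p q) / 2 := by
  have h2 : ((√2 : ℝ) : ℂ)⁻¹ * ((√2 : ℝ) : ℂ)⁻¹ = 1 / 2 := by
    rw [← mul_inv, ← Complex.ofReal_mul, Real.mul_self_sqrt (by norm_num)]
    norm_num
  have hS := permU_conj (Equiv.swap p q) Y p p
  have hl : ((permU (Equiv.swap p q) : Matrix J J ℂ) * Y) p p = Y q p := by
    simp [permU, Matrix.mul_apply]
  have hr : (Y * star (permU (Equiv.swap p q) : Matrix J J ℂ)) p p = Y p q := by
    simp [permU, Matrix.mul_apply, Matrix.star_apply, apply_ite]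
  simp only [Equiv.swap_apply_left] at hS
  simp only [mixU, star_smul, star_add, star_one, Matrix.smul_mul, Matrix.mul_smul, smul_smul,
      add_mul, mul_add, Matrix.one_mul, Matrix.mul_one, Matrix.smul_apply, Matrix.add_apply,
      hS, hl, hr, smul_eq_mul]
  simp
  linear_combination (Y p p + Y q q + Complex.I * Y q p - Complex.I * Y p q) * h2 -
    (((√2 : ℝ) : ℂ)⁻¹ * ((√2 : ℝ) : ℂ)⁻¹) * Y q q * Complex.I_sq

lemma mom1_perm (X : Matrix J J ℂ) (σ : Equiv.Perm J) (i j : J) :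
    mom1 μ X (σ i) (σ j) = mom1 μ X i j := by
  rw [mom1_inv μ X (permU σ) i j]
  simp only [permU_conj, mom1]

lemma mom2_perm (X : Matrix J J ℂ) (σ : Equiv.Perm J) (i j k l : J) :
    mom2 μ X (σ i) (σ j) (σ k) (σ l) = mom2 μ X i j k l := by
  rw [mom2_inv μ X (permU σ) i j]
  simp only [permU_conj, mom2]

lemma mom1_offdiag (X : Matrix J J ℂ) {i j : J} (h : i ≠ j) : mom1 μ X i j = 0 := by
  have h1 := mom1_inv μ X (phaseU i) i j
  simp only [phaseU_conj, if_true, if_neg h.symm, mul_one, integral_const_mul] at h1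
  change _ = Complex.I * mom1 μ X i j at h1
  have h2 := congrArg Complex.re h1
  have h3 := congrArg Complex.im h1
  simp at h2 h3
  apply Complex.ext <;> simp <;> linarith

/-- Invariance under the phase unitary at `p`. -/
lemma mom2_phase (X : Matrix J J ℂ) (p i j k l : J) :
    mom2 μ X i j k l =
      ((if i = p then Complex.I else 1) * (if j = p then -Complex.I else 1) *
        ((if k = p then Complex.I else 1) * (if l = p then -Complex.I else 1))) *
        mom2 μ X i j k l := by
  conv_lhs => rw [mom2_inv μ X (phaseU p) i j k l]
  rw [mom2, ← integral_const_mul]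
  congr 1
  ext U
  rw [phaseU_conj, phaseU_conj]
  ring

/-- The second moments vanish unless `{i, k} = {j, l}` as multisets. -/
lemma mom2_eq_zero (X : Matrix J J ℂ) {i j k l : J} (h1 : ¬ (i = j ∧ k = l))
    (h2 : ¬ (i = l ∧ k = j)) : mom2 μ X i j k l = 0 := by
  have key : ∀ p, ((if i = p then Complex.I else 1) * (if j = p then -Complex.I else 1) *
        ((if k = p then Complex.I else 1) * (if l = p then -Complex.I else 1))) ≠ 1 →
        mom2 μ X i j k l = 0 := by
    intro p hp
    have h := mom2_phase μ X p i j k l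
    by_contra h0
    exact hp (mul_right_cancel₀ h0 (by rw [← h, one_mul]))
  -- Some index `p` occurs a different number of times among `i, k` than among `j, l`; its net
  -- phase is `I` or `I² = -1`.
  have hI : Complex.I ≠ 1 := fun h => by simpa using congrArg Complex.im h
  have hI' : -Complex.I ≠ 1 := fun h => by simpa using congrArg Complex.im h
  have hm : (-1 : ℂ) ≠ 1 := by norm_num
  by_cases hij : i = j
  · subst hij
    have hkl : k ≠ l := fun h => h1 ⟨rfl, h⟩
    apply key k
    by_cases hik : i = k <;> simp [hkl.symm, hik, hI]
  · by_cases hil : i = l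
    · subst hil
      have hkj : k ≠ j := fun h => h2 ⟨rfl, h⟩
      apply key k
      by_cases hik : i = k <;> simp [hkj.symm, hik, hI]
    · apply key i
      by_cases hik : k = i <;> simp [Ne.symm hij, Ne.symm hil, hik, hI, hm]

lemma exists_perm_two {i j i' j' : J} (h : i ≠ j) (h' : i' ≠ j') :
    ∃ σ : Equiv.Perm J, σ i = i' ∧ σ j = j' := by
  refine ⟨Equiv.swap (Equiv.swap i i' j) j' * Equiv.swap i i', ?_, ?_⟩
  · rw [Equiv.Perm.mul_apply, Equiv.swap_apply_left, Equiv.swap_apply_of_ne_of_ne _ h']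
    intro h0
    apply h
    apply (Equiv.swap i i').injective
    rw [Equiv.swap_apply_left, ← h0]
  · rw [Equiv.Perm.mul_apply, Equiv.swap_apply_left]

/-- Averaging a traceless matrix over the unitary group gives zero. -/
lemma mom1_eq_zero (X : Matrix J J ℂ) (hX : X.trace = 0) (i j : J) : mom1 μ X i j = 0 := by
  by_cases h : i = j
  · subst h
    have hc : ∀ k, mom1 μ X k k = mom1 μ X i i := fun k => by
      rw [← mom1_perm μ X (Equiv.swap i k) i i, Equiv.swap_apply_left]
    have hs : ∑ k, mom1 μ X k k = 0 := by
      simp only [mom1]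
      rw [← integral_finsetSum _ fun k _ => integrable_conjU μ X k k]
      have : ∀ U, ∑ k, conjU X U k k = 0 := fun U => (trace_conjU X U).trans hX
      simp [this]
    simp only [hc, Finset.sum_const, Finset.card_univ, nsmul_eq_mul, mul_eq_zero,
      Nat.cast_eq_zero] at hs
    exact hs.resolve_left (Fintype.card_pos_iff.2 ⟨i⟩).ne'
  · exact mom1_offdiag μ X h

/-- Invariance under the mixing unitary ties the three kinds of nonzero second moments
together. -/
lemma mom2_mix (X : Matrix J J ℂ) {p q : J} (h : p ≠ q) :
    mom2 μ X p p p p = mom2 μ X p p q q + mom2 μ X p q q p := by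
  have hqq : mom2 μ X q q q q = mom2 μ X p p p p := by
    rw [← mom2_perm μ X (Equiv.swap p q) p p p p, Equiv.swap_apply_left]
  have h1 := mom2_inv μ X (mixU p q) p p p p
  simp only [mixU_conj] at h1
  have hexp : ∀ U, (conjU X U p p + conjU X U q q + Complex.I * conjU X U q p
        - Complex.I * conjU X U p q) / 2 *
      ((conjU X U p p + conjU X U q q + Complex.I * conjU X U q p
        - Complex.I * conjU X U p q) / 2) =
      (1 / 4 : ℂ) * (conjU X U p p * conjU X U p p) + (1 / 4 : ℂ) * (conjU X U q q * conjU X U q q)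
      + (1 / 2 : ℂ) * (conjU X U p p * conjU X U q q)
      + (1 / 2 : ℂ) * (conjU X U p q * conjU X U q p)
      + (-1 / 4 : ℂ) * (conjU X U q p * conjU X U q p)
      + (-1 / 4 : ℂ) * (conjU X U p q * conjU X U p q)
      + (Complex.I / 2) * (conjU X U p p * conjU X U q p)
      + (-Complex.I / 2) * (conjU X U p p * conjU X U p q)
      + (Complex.I / 2) * (conjU X U q q * conjU X U q p)
      + (-Complex.I / 2) * (conjU X U q q * conjU X U p q) := by
    intro U
    linear_combination (conjU X U q p - conjU X U p q) ^ 2 / 4 * Complex.I_sq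
  have hi := fun (c : ℂ) i j k l => (integrable_conjU_mul μ X i j k l).const_mul c
  simp only [hexp] at h1
  iterate 9 rw [integral_add (by
    first
      | exact hi _ _ _ _ _
      | (repeat' first | exact hi _ _ _ _ _ | apply Integrable.add)) (hi _ _ _ _ _)] at h1
  simp only [integral_const_mul] at h1
  simp only [← mom2.eq_def] at h1
  have z : ∀ i j k l, ¬ (i = j ∧ k = l) → ¬ (i = l ∧ k = j) → mom2 μ X i j k l = 0 :=
    fun i j k l => mom2_eq_zero μ X
  rw [hqq, z q p q p (by simp [h.symm]) (by simp [h.symm]), z p q p q (by simp [h]) (by simp [h]),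
    z p p q p (by simp [h.symm]) (by simp [h.symm]), z p p p q (by simp [h]) (by simp [h]),
    z q q q p (by simp [h.symm]) (by simp [h.symm]), z q q p q (by simp [h]) (by simp [h])] at h1
  linear_combination 2 * h1

/-- The second moments of `U X U†` for a traceless matrix `X`. -/
theorem mom2_eq (X : Matrix J J ℂ) (hX : X.trace = 0) (hd : 1 < Fintype.card J) (i j k l : J) :
    mom2 μ X i j k l = (X * X).trace / ((Fintype.card J : ℂ) ^ 2 - 1) *
      ((if i = l ∧ k = j then 1 else 0) -
        (if i = j ∧ k = l then 1 else 0) / (Fintype.card J : ℂ)) := by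
  obtain ⟨p, q, hpq⟩ := Fintype.one_lt_card_iff.1 hd
  set d : ℂ := (Fintype.card J : ℂ) with hdd
  set t : ℂ := (X * X).trace with ht
  set a := mom2 μ X p p q q with ha
  set b := mom2 μ X p q q p with hb
  set c := mom2 μ X p p p p with hc
  have hA : ∀ x y, x ≠ y → mom2 μ X x x y y = a := fun x y hxy => by
    obtain ⟨σ, h1, h2⟩ := exists_perm_two hpq hxy
    rw [← h1, ← h2, mom2_perm]
  have hB : ∀ x y, x ≠ y → mom2 μ X x y y x = b := fun x y hxy => by
    obtain ⟨σ, h1, h2⟩ := exists_perm_two hpq hxy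
    rw [← h1, ← h2, mom2_perm]
  have hC : ∀ x, mom2 μ X x x x x = c := fun x => by
    rw [hc, ← mom2_perm μ X (Equiv.swap p x) p p p p, Equiv.swap_apply_left]
  have e1 : c = a + b := mom2_mix μ X hpq
  -- `E[Y_pp tr Y] = 0`
  have e2 : c + (d - 1) * a = 0 := by
    have hs : ∑ y, mom2 μ X p p y y = 0 := by
      simp only [mom2]
      rw [← integral_finsetSum _ fun k _ => integrable_conjU_mul μ X p p k k]
      have : ∀ U, ∑ y, conjU X U y y = 0 := fun U => (trace_conjU X U).trans hX
      simp [← Finset.mul_sum, this]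
    have h' : ∀ y, mom2 μ X p p y y = a + if y = p then c - a else 0 := fun y => by
      by_cases hy : y = p
      · subst hy; simp [hC]
      · simp [hy, hA p y (Ne.symm hy)]
    simp only [h', Finset.sum_add_distrib, Finset.sum_const, Finset.card_univ, nsmul_eq_mul,
      Finset.sum_ite_eq', Finset.mem_univ, if_true] at hs
    linear_combination hs
  -- `E[tr Y²] = tr X²`
  have e3 : d * c + d * (d - 1) * b = t := by
    have hs : ∑ x, ∑ y, mom2 μ X x y y x = t := by
      simp only [mom2]
      simp_rw [← integral_finsetSum _ fun k _ => integrable_conjU_mul μ X _ k k _]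
      rw [← integral_finsetSum _ fun x _ => integrable_finsetSum _ fun y _ =>
        integrable_conjU_mul μ X x y y x]
      have : ∀ U, ∑ x, ∑ y, conjU X U x y * conjU X U y x = t := fun U => by
        rw [ht, ← trace_conjU_sq X U]
        simp [Matrix.trace, Matrix.mul_apply]
      simp [this]
    have h' : ∀ x y, mom2 μ X x y y x = b + if y = x then c - b else 0 := fun x y => by
      by_cases hy : y = x
      · subst hy; simp [hC]
      · simp [hy, hB x y (Ne.symm hy)]
    simp only [h', Finset.sum_add_distrib, Finset.sum_const, Finset.card_univ, nsmul_eq_mul,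
      Finset.sum_ite_eq', Finset.mem_univ, if_true] at hs
    linear_combination hs
  have hd0 : d ≠ 0 := by rw [hdd]; exact_mod_cast (by omega : Fintype.card J ≠ 0)
  have hd1 : d - 1 ≠ 0 := by
    rw [sub_ne_zero, hdd]; exact_mod_cast (by omega : Fintype.card J ≠ 1)
  have hd2 : d + 1 ≠ 0 := by rw [hdd]; exact_mod_cast (by omega : Fintype.card J + 1 ≠ 0)
  have hd3 : d ^ 2 - 1 ≠ 0 := by
    rw [show d ^ 2 - 1 = (d - 1) * (d + 1) by ring]; exact mul_ne_zero hd1 hd2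
  have eb : b = -d * a := by linear_combination e2 - e1
  have ea : a = t / (d ^ 2 - 1) * (0 - 1 / d) := by
    field_simp
    linear_combination (-1 : ℂ) * e3 + d * e1 + d ^ 2 * eb
  have eb' : b = t / (d ^ 2 - 1) * (1 - 0 / d) := by
    rw [eb, ea]; field_simp; ring
  have ec' : c = t / (d ^ 2 - 1) * (1 - 1 / d) := by
    rw [e1, eb', ea]; ring
  by_cases h1 : i = j ∧ k = l
  · obtain ⟨rfl, rfl⟩ := h1
    by_cases h2 : i = k
    · subst h2; simpa [hC] using ec'
    · simpa [hA i k h2, h2] using ea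
  · by_cases h2 : i = l ∧ k = j
    · obtain ⟨rfl, rfl⟩ := h2
      have h3 : i ≠ k := fun h => h1 ⟨h, h.symm⟩
      simpa [hB i k h3, h3] using eb'
    · simp [h1, h2, mom2_eq_zero μ X h1 h2]

/-! ### Partial traces and the variance of the kernel -/

variable {K R : Type*} [Fintype K] [DecidableEq K] [Fintype R] [DecidableEq R]

/-- Partial trace over the second factor, for an index set identified with `K × R` through `g`. -/
def ptr (g : K × R ≃ J) (Y : Matrix J J ℂ) : Matrix K K ℂ :=
  Matrix.of fun a b => ∑ r, Y (g (a, r)) (g (b, r))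

lemma continuous_ptr (g : K × R ≃ J) (X : Matrix J J ℂ) (a b : K) :
    Continuous fun U => ptr g (conjU X U) a b := by
  simp only [ptr, Matrix.of_apply]
  exact continuous_finsetSum _ fun r _ => continuous_conjU X _ _

lemma integrable_ptr (g : K × R ≃ J) (X : Matrix J J ℂ) (a b : K) :
    Integrable (fun U => ptr g (conjU X U) a b) μ := by
  simp only [ptr, Matrix.of_apply]
  exact integrable_finsetSum _ fun r _ => integrable_conjU μ X _ _

lemma integral_ptr (g : K × R ≃ J) (X : Matrix J J ℂ) (hX : X.trace = 0) (a b : K) :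
    ∫ U, ptr g (conjU X U) a b ∂μ = 0 := by
  simp only [ptr, Matrix.of_apply]
  rw [integral_finsetSum _ fun r _ => integrable_conjU μ X _ _]
  exact Finset.sum_eq_zero fun r _ => mom1_eq_zero μ X hX _ _

lemma ptr_mul_ptr (g : K × R ≃ J) (Y : Matrix J J ℂ) (a b a' b' : K) :
    ptr g Y a b * ptr g Y a' b' =
      ∑ r, ∑ r', Y (g (a, r)) (g (b, r)) * Y (g (a', r')) (g (b', r')) := by
  simp only [ptr, Matrix.of_apply, Finset.sum_mul_sum]

lemma integrable_ptr_mul (g : K × R ≃ J) (X : Matrix J J ℂ) (a b a' b' : K) :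
    Integrable (fun U => ptr g (conjU X U) a b * ptr g (conjU X U) a' b') μ := by
  simp only [ptr_mul_ptr]
  exact integrable_finsetSum _ fun r _ => integrable_finsetSum _ fun r' _ =>
    integrable_conjU_mul μ X _ _ _ _

/-- Second moments of the partial trace of `U X U†`. -/
lemma integral_ptr_mul (g : K × R ≃ J) (X : Matrix J J ℂ) (hX : X.trace = 0)
    (hd : 1 < Fintype.card J) (a b a' b' : K) :
    ∫ U, ptr g (conjU X U) a b * ptr g (conjU X U) a' b' ∂μ =
      (X * X).trace / ((Fintype.card J : ℂ) ^ 2 - 1) * (Fintype.card R : ℂ) *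
      ((if a = b' ∧ a' = b then 1 else 0) -
        (if a = b ∧ a' = b' then 1 else 0) / (Fintype.card K : ℂ)) := by
  have hJ : (Fintype.card J : ℂ) = Fintype.card K * Fintype.card R := by
    rw [← Fintype.card_congr g, Fintype.card_prod]; push_cast; rfl
  have hR : (Fintype.card R : ℂ) ≠ 0 := by
    intro h
    rw [h, mul_zero, Nat.cast_eq_zero] at hJ
    omega
  simp only [ptr_mul_ptr]
  rw [integral_finsetSum _ fun r _ => integrable_finsetSum _ fun r' _ =>
    integrable_conjU_mul μ X _ _ _ _]
  simp_rw [integral_finsetSum _ fun r' _ => integrable_conjU_mul μ X _ _ _ _]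
  have h : ∀ r r', ∫ U, conjU X U (g (a, r)) (g (b, r)) * conjU X U (g (a', r')) (g (b', r')) ∂μ =
      (X * X).trace / ((Fintype.card J : ℂ) ^ 2 - 1) *
        ((if r = r' then (if a = b' ∧ a' = b then 1 else 0) else 0) -
          (if a = b ∧ a' = b' then 1 else 0) / (Fintype.card J : ℂ)) := by
    intro r r'
    refine (mom2_eq μ X hX hd _ _ _ _).trans ?_
    simp only [EmbeddingLike.apply_eq_iff_eq, Prod.mk.injEq, and_true]
    by_cases hr : r = r'
    · subst hr; simp
    · simp [hr]
  simp only [h, ← Finset.mul_sum, Finset.sum_sub_distrib, Finset.sum_ite_eq, Finset.mem_univ,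
    if_true, Finset.sum_const, Finset.card_univ, nsmul_eq_mul]
  rw [mul_assoc]
  congr 1
  rw [hJ]
  field_simp

/-- The projected kernel `Tr[Tr_R[U X U†] Tr_R[U' X' U'†]]`. -/
noncomputable def ker (g : K × R ≃ J) (X X' : Matrix J J ℂ)
    (p : Matrix.unitaryGroup J ℂ × Matrix.unitaryGroup J ℂ) : ℂ :=
  (ptr g (conjU X p.1) * ptr g (conjU X' p.2)).trace

lemma ker_eq (g : K × R ≃ J) (X X' : Matrix J J ℂ)
    (p : Matrix.unitaryGroup J ℂ × Matrix.unitaryGroup J ℂ) :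
    ker g X X' p = ∑ a, ∑ b, ptr g (conjU X p.1) a b * ptr g (conjU X' p.2) b a := by
  simp [ker, Matrix.trace, Matrix.mul_apply]

lemma conjU_herm (X : Matrix J J ℂ) (hX : X.IsHermitian) (U : Matrix.unitaryGroup J ℂ) :
    (conjU X U).IsHermitian := by
  have := Matrix.isHermitian_mul_mul_conjTranspose (U : Matrix J J ℂ) hX
  simpa [conjU, Matrix.star_eq_conjTranspose] using this

lemma ptr_herm (g : K × R ≃ J) (Y : Matrix J J ℂ) (hY : Y.IsHermitian) :
    (ptr g Y).IsHermitian := by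
  ext a b
  simp only [ptr, Matrix.conjTranspose_apply, Matrix.of_apply, star_sum]
  exact Finset.sum_congr rfl fun r _ => hY.apply _ _

lemma ker_real (g : K × R ≃ J) (X X' : Matrix J J ℂ) (hX : X.IsHermitian) (hX' : X'.IsHermitian)
    (p : Matrix.unitaryGroup J ℂ × Matrix.unitaryGroup J ℂ) :
    (((ker g X X' p).re : ℝ) : ℂ) = ker g X X' p := by
  rw [← Complex.conj_eq_iff_re]
  change star (ker g X X' p) = _
  rw [ker, ← Matrix.trace_conjTranspose, Matrix.conjTranspose_mul,
    (ptr_herm g _ (conjU_herm X hX _)).eq, (ptr_herm g _ (conjU_herm X' hX' _)).eq,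
    Matrix.trace_mul_comm]

lemma integrable_ker_term (g : K × R ≃ J) (X X' : Matrix J J ℂ) (a b : K) :
    Integrable (fun p : Matrix.unitaryGroup J ℂ × Matrix.unitaryGroup J ℂ =>
      ptr g (conjU X p.1) a b * ptr g (conjU X' p.2) b a) (μ.prod μ) :=
  (integrable_ptr μ g X a b).mul_prod (integrable_ptr μ g X' b a)

lemma integrable_ker (g : K × R ≃ J) (X X' : Matrix J J ℂ) :
    Integrable (ker g X X') (μ.prod μ) := by
  have : ker g X X' = fun p => ∑ a, ∑ b, ptr g (conjU X p.1) a b * ptr g (conjU X' p.2) b a :=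
    funext fun p => ker_eq g X X' p
  rw [this]
  exact integrable_finsetSum _ fun a _ => integrable_finsetSum _ fun b _ =>
    integrable_ker_term μ g X X' a b

lemma integral_ker (g : K × R ≃ J) (X X' : Matrix J J ℂ) (hX : X.trace = 0) :
    ∫ p, ker g X X' p ∂(μ.prod μ) = 0 := by
  simp only [ker_eq]
  rw [integral_finsetSum _ fun a _ => integrable_finsetSum _ fun b _ =>
    integrable_ker_term μ g X X' a b]
  refine Finset.sum_eq_zero fun a _ => ?_
  rw [integral_finsetSum _ fun b _ => integrable_ker_term μ g X X' a b]
  refine Finset.sum_eq_zero fun b _ => ?_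
  rw [integral_prod_mul (fun U => ptr g (conjU X U) a b) (fun U => ptr g (conjU X' U) b a),
    integral_ptr μ g X hX, zero_mul]

/-- Over four indices, the square of the traceless swap tensor on `K ⊗ K` sums to `|K|² - 1`. -/
lemma sum_swap_sq [Nonempty K] :
    ∑ a : K, ∑ b : K, ∑ a' : K, ∑ b' : K,
      (((if a = b' ∧ a' = b then 1 else 0) -
        (if a = b ∧ a' = b' then 1 else 0) / (Fintype.card K : ℂ)) *
      ((if b = a' ∧ b' = a then 1 else 0) -
        (if b = a ∧ b' = a' then 1 else 0) / (Fintype.card K : ℂ))) =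
      (Fintype.card K : ℂ) ^ 2 - 1 := by
  have hK : (Fintype.card K : ℂ) ≠ 0 := by exact_mod_cast Fintype.card_ne_zero
  have h : ∀ a b a' b' : K, (((if a = b' ∧ a' = b then 1 else 0) -
        (if a = b ∧ a' = b' then 1 else 0) / (Fintype.card K : ℂ)) *
      ((if b = a' ∧ b' = a then 1 else 0) -
        (if b = a ∧ b' = a' then 1 else 0) / (Fintype.card K : ℂ))) =
      (if b' = a then (if a' = b then 1 else 0) else 0)
      - (2 / (Fintype.card K : ℂ)) * (if b' = a then (if a' = b then (if b = a then 1 else 0)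
          else 0) else 0)
      + (1 / (Fintype.card K : ℂ) ^ 2) * (if b' = a' then (if b = a then 1 else 0) else 0) := by
    intro a b a' b'
    by_cases h1 : b' = a
    · subst h1
      by_cases h2 : a' = b
      · subst h2
        by_cases h3 : a' = b'
        · subst h3; simp; ring
        · simp [h3, Ne.symm h3]
      · by_cases h3 : b = b'
        · subst h3; simp [h2, Ne.symm h2]
        · simp [h2, Ne.symm h2, h3, Ne.symm h3]
    · by_cases h2 : b' = a'
      · subst h2
        by_cases h3 : b = a
        · subst h3; simp [h1, Ne.symm h1]; ring
        · simp [h1, Ne.symm h1, h3, Ne.symm h3]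
      · simp [h1, Ne.symm h1, h2, Ne.symm h2]
  simp only [h, Finset.sum_add_distrib, Finset.sum_sub_distrib, ← Finset.mul_sum,
    Finset.sum_ite_eq', Finset.mem_univ, if_true, Finset.sum_const, Finset.card_univ, nsmul_eq_mul]
  field_simp
  ring

lemma integral_ker_sq [Nonempty K] (g : K × R ≃ J) (X X' : Matrix J J ℂ) (hX : X.trace = 0)
    (hX' : X'.trace = 0) (hd : 1 < Fintype.card J) :
    ∫ p, ker g X X' p ^ 2 ∂(μ.prod μ) =
      (X * X).trace / ((Fintype.card J : ℂ) ^ 2 - 1) * (Fintype.card R : ℂ) *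
      ((X' * X').trace / ((Fintype.card J : ℂ) ^ 2 - 1) * (Fintype.card R : ℂ)) *
      ((Fintype.card K : ℂ) ^ 2 - 1) := by
  have hexp : ∀ p, ker g X X' p ^ 2 = ∑ a, ∑ b, ∑ a', ∑ b',
      (ptr g (conjU X p.1) a b * ptr g (conjU X p.1) a' b') *
      (ptr g (conjU X' p.2) b a * ptr g (conjU X' p.2) b' a') := by
    intro p
    rw [ker_eq, sq, Finset.sum_mul]
    refine Finset.sum_congr rfl fun a _ => ?_
    rw [Finset.sum_mul]
    refine Finset.sum_congr rfl fun b _ => ?_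
    simp only [Finset.mul_sum]
    refine Finset.sum_congr rfl fun a' _ => Finset.sum_congr rfl fun b' _ => ?_
    ring
  have hint : ∀ a b a' b' : K, Integrable
      (fun p : Matrix.unitaryGroup J ℂ × Matrix.unitaryGroup J ℂ =>
        (ptr g (conjU X p.1) a b * ptr g (conjU X p.1) a' b') *
        (ptr g (conjU X' p.2) b a * ptr g (conjU X' p.2) b' a')) (μ.prod μ) := fun a b a' b' =>
    (integrable_ptr_mul μ g X a b a' b').mul_prod (integrable_ptr_mul μ g X' b a b' a')
  simp only [hexp]
  rw [← sum_swap_sq (K := K)]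
  rw [integral_finsetSum _ fun a _ => integrable_finsetSum _ fun b _ =>
    integrable_finsetSum _ fun a' _ => integrable_finsetSum _ fun b' _ => hint a b a' b',
    Finset.mul_sum]
  refine Finset.sum_congr rfl fun a _ => ?_
  rw [integral_finsetSum _ fun b _ =>
    integrable_finsetSum _ fun a' _ => integrable_finsetSum _ fun b' _ => hint a b a' b',
    Finset.mul_sum]
  refine Finset.sum_congr rfl fun b _ => ?_
  rw [integral_finsetSum _ fun a' _ => integrable_finsetSum _ fun b' _ => hint a b a' b',
    Finset.mul_sum]
  refine Finset.sum_congr rfl fun a' _ => ?_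
  rw [integral_finsetSum _ fun b' _ => hint a b a' b', Finset.mul_sum]
  refine Finset.sum_congr rfl fun b' _ => ?_
  rw [integral_prod_mul (fun U => ptr g (conjU X U) a b * ptr g (conjU X U) a' b')
    (fun U => ptr g (conjU X' U) b a * ptr g (conjU X' U) b' a'),
    integral_ptr_mul μ g X hX hd, integral_ptr_mul μ g X' hX' hd]
  ring

/-- The difference `A - 1/|J|`, which is the traceless part of `A` when `A` has trace one. -/
noncomputable def tless (A : Matrix J J ℂ) : Matrix J J ℂ := A - (Fintype.card J : ℂ)⁻¹ • 1

lemma tless_trace [Nonempty J] (A : Matrix J J ℂ) (hA : A.trace = 1) : (tless A).trace = 0 := by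
  have : (Fintype.card J : ℂ) ≠ 0 := by exact_mod_cast Fintype.card_ne_zero
  simp [tless, hA, this]

lemma tless_herm (A : Matrix J J ℂ) (hA : A.IsHermitian) : (tless A).IsHermitian := by
  refine hA.sub ?_
  ext i j
  by_cases h : i = j
  · simp [h]
  · simp [h, Ne.symm h]

lemma tless_trace_sq [Nonempty J] (A : Matrix J J ℂ) (hA : A.trace = 1) :
    (tless A * tless A).trace = (A * A).trace - (Fintype.card J : ℂ)⁻¹ := by
  have : (Fintype.card J : ℂ) ≠ 0 := by exact_mod_cast Fintype.card_ne_zero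
  simp [tless, hA, this, sub_mul, mul_sub]

lemma conjU_tless (A : Matrix J J ℂ) (U : Matrix.unitaryGroup J ℂ) :
    conjU A U = conjU (tless A) U + (Fintype.card J : ℂ)⁻¹ • 1 := by
  simp [conjU, tless, mul_sub, sub_mul]

lemma trace_ptr (g : K × R ≃ J) (Y : Matrix J J ℂ) : (ptr g Y).trace = Y.trace := by
  simp only [ptr, Matrix.trace, Matrix.diag_apply, Matrix.of_apply]
  rw [← Fintype.sum_prod_type', ← Equiv.sum_comp g]

lemma ptr_conjU_tless [Nonempty J] (g : K × R ≃ J) (A : Matrix J J ℂ)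
    (U : Matrix.unitaryGroup J ℂ) :
    ptr g (conjU A U) = ptr g (conjU (tless A) U) + (Fintype.card K : ℂ)⁻¹ • 1 := by
  have hJ : (Fintype.card J : ℂ) = Fintype.card K * Fintype.card R := by
    rw [← Fintype.card_congr g, Fintype.card_prod]; push_cast; rfl
  have hJ0 : (Fintype.card J : ℂ) ≠ 0 := by exact_mod_cast Fintype.card_ne_zero
  have hK : (Fintype.card K : ℂ) ≠ 0 := fun h => hJ0 (by rw [hJ, h, zero_mul])
  have hR : (Fintype.card R : ℂ) ≠ 0 := fun h => hJ0 (by rw [hJ, h, mul_zero])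
  rw [conjU_tless A]
  ext a b
  simp only [ptr, Matrix.of_apply, Matrix.add_apply, Finset.sum_add_distrib, Matrix.smul_apply,
    Matrix.one_apply, EmbeddingLike.apply_eq_iff_eq, Prod.mk.injEq, and_true, Finset.sum_const,
    Finset.card_univ, nsmul_eq_mul, smul_eq_mul, hJ]
  field_simp

/-- Passing to traceless parts changes the kernel by the constant `1/|K|`. -/
lemma ker_tless [Nonempty J] (g : K × R ≃ J) (A A' : Matrix J J ℂ) (hA : A.trace = 1)
    (hA' : A'.trace = 1) (p : Matrix.unitaryGroup J ℂ × Matrix.unitaryGroup J ℂ) :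
    ker g A A' p = (Fintype.card K : ℂ)⁻¹ + ker g (tless A) (tless A') p := by
  have hK : Nonempty K := ⟨(g.symm (Classical.arbitrary J)).1⟩
  have hK : (Fintype.card K : ℂ) ≠ 0 := by exact_mod_cast Fintype.card_ne_zero
  simp only [ker, ptr_conjU_tless g A, ptr_conjU_tless g A', add_mul, mul_add, Matrix.trace_add]
  simp [trace_ptr, trace_conjU, tless_trace A hA, tless_trace A' hA', hK, add_comm]

lemma trace_sq_herm (X : Matrix J J ℂ) (hX : X.IsHermitian) :
    (X * X).trace = ((∑ i, ∑ j, ‖X i j‖ ^ 2 : ℝ) : ℂ) := by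
  simp only [Matrix.trace, Matrix.diag_apply, Matrix.mul_apply]
  push_cast
  refine Finset.sum_congr rfl fun i _ => Finset.sum_congr rfl fun j _ => ?_
  rw [← hX.apply j i]
  exact Complex.mul_conj' _

/-- The variance of the kernel for trace-one Hermitian matrices. -/
theorem variance_ker (g : K × R ≃ J) (A A' : Matrix J J ℂ) (hA : A.trace = 1)
    (hA' : A'.trace = 1) (hAh : A.IsHermitian) (hAh' : A'.IsHermitian)
    (hd : 1 < Fintype.card J) :
    ProbabilityTheory.variance (fun p => (ker g A A' p).re) (μ.prod μ) =
      ((A * A).trace.re - (Fintype.card J : ℝ)⁻¹) / ((Fintype.card J : ℝ) ^ 2 - 1) *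
        (Fintype.card R : ℝ) *
      (((A' * A').trace.re - (Fintype.card J : ℝ)⁻¹) / ((Fintype.card J : ℝ) ^ 2 - 1) *
        (Fintype.card R : ℝ)) *
      ((Fintype.card K : ℝ) ^ 2 - 1) := by
  have hJ : Nonempty J := Fintype.card_pos_iff.1 (by omega)
  have hK : Nonempty K := ⟨(g.symm (Classical.arbitrary J)).1⟩
  have hX := tless_trace A hA
  have hX' := tless_trace A' hA'
  have hreal := ker_real g _ _ (tless_herm A hAh) (tless_herm A' hAh')
  have hm : AEStronglyMeasurable (fun p => (ker g (tless A) (tless A') p).re) (μ.prod μ) :=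
    (integrable_ker μ g (tless A) (tless A')).re.aestronglyMeasurable
  have h1 : (fun p => (ker g A A' p).re) =
      fun p => (Fintype.card K : ℝ)⁻¹ + (ker g (tless A) (tless A') p).re := by
    ext p
    rw [ker_tless g A A' hA hA', Complex.add_re, ← Complex.ofReal_natCast, ← Complex.ofReal_inv,
      Complex.ofReal_re]
  have h0 : ∫ p, (ker g (tless A) (tless A') p).re ∂(μ.prod μ) = 0 := by
    apply Complex.ofReal_injective
    rw [← integral_complex_ofReal]
    simp only [hreal]
    exact integral_ker μ g _ _ hX
  rw [h1, ProbabilityTheory.variance_const_add hm,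
    ProbabilityTheory.variance_of_integral_eq_zero hm.aemeasurable h0]
  apply Complex.ofReal_injective
  rw [← integral_complex_ofReal]
  simp only [Complex.ofReal_pow, hreal]
  rw [integral_ker_sq μ g _ _ hX hX' hd, tless_trace_sq A hA, tless_trace_sq A' hA',
    trace_sq_herm A hAh, trace_sq_herm A' hAh']
  simp only [Complex.ofReal_re]
  push_cast
  rfl

/-- The purity of a trace-one Hermitian matrix exceeds `1/|J|` by the squared Frobenius norm of
its traceless part, so equality characterises the completely mixed state. -/
lemma purity_eq_iff [Nonempty J] (A : Matrix J J ℂ) (hA : A.trace = 1) (hAh : A.IsHermitian) :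
    (A * A).trace.re - (Fintype.card J : ℝ)⁻¹ = 0 ↔ A = (Fintype.card J : ℂ)⁻¹ • 1 := by
  have h1 : (A * A).trace.re - (Fintype.card J : ℝ)⁻¹ = ∑ i, ∑ j, ‖tless A i j‖ ^ 2 := by
    have h := congrArg Complex.re (tless_trace_sq A hA)
    rw [trace_sq_herm _ (tless_herm A hAh), Complex.ofReal_re, Complex.sub_re,
      ← Complex.ofReal_natCast, ← Complex.ofReal_inv, Complex.ofReal_re] at h
    exact h.symm
  rw [h1, ← sub_eq_zero (a := A)]
  change _ ↔ tless A = 0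
  constructor
  · intro h
    ext i j
    rw [Finset.sum_eq_zero_iff_of_nonneg fun i _ => Finset.sum_nonneg fun j _ => sq_nonneg _] at h
    have h2 := h i (Finset.mem_univ i)
    rw [Finset.sum_eq_zero_iff_of_nonneg fun j _ => sq_nonneg _] at h2
    simpa using h2 j (Finset.mem_univ j)
  · intro h
    simp [h]

end moments

/-! ### Reduction from `n` qubits to the qubits of `S_W` -/

section qubits

variable {n : ℕ}

/-- Bit strings on the qubits of `SW` that lie outside `Sκ`. -/
abbrev RestBasis (SW Sκ : Finset (Fin n)) := {i : {i : Fin n // i ∈ SW} // i.1 ∉ Sκ} → Fin 2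

/-- Splitting the qubits of `SW` into those of `Sκ` and the others. -/
def glueEquiv {SW Sκ : Finset (Fin n)} (h : Sκ ⊆ SW) :
    ({i : Fin n // i ∈ Sκ} → Fin 2) × RestBasis SW Sκ ≃ ({i : Fin n // i ∈ SW} → Fin 2) where
  toFun p := fun i => if hi : i.1 ∈ Sκ then p.1 ⟨i.1, hi⟩ else p.2 ⟨i, hi⟩
  invFun x := (fun i => x ⟨i.1, h i.2⟩, fun i => x i.1)
  left_inv p := by
    ext i
    · simp
    · simp [i.2]
  right_inv x := by
    ext i
    by_cases hi : i.1 ∈ Sκ <;> simp [hi]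

/-- Splitting the qubits outside `Sκ` into those inside and those outside `SW`. -/
def compEquiv {SW Sκ : Finset (Fin n)} (h : Sκ ⊆ SW) :
    RestBasis SW Sκ × ({i : Fin n // i ∉ SW} → Fin 2) ≃ ({i : Fin n // i ∉ Sκ} → Fin 2) where
  toFun p := fun i => if hi : i.1 ∈ SW then p.1 ⟨⟨i.1, hi⟩, i.2⟩ else p.2 ⟨i.1, hi⟩
  invFun c := (fun i => c ⟨i.1.1, i.2⟩, fun i => c ⟨i.1, fun hi => i.2 (h hi)⟩)
  left_inv p := by
    ext i
    · simp
    · simp [i.2]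
  right_inv x := by
    ext i
    by_cases hi : i.1 ∈ SW <;> simp [hi]

lemma mergeQ_comp {SW Sκ : Finset (Fin n)} (h : Sκ ⊆ SW) (a : {i : Fin n // i ∈ Sκ} → Fin 2)
    (r : RestBasis SW Sκ) (t : {i : Fin n // i ∉ SW} → Fin 2) :
    mergeQ Sκ a (compEquiv h (r, t)) = mergeQ SW (glueEquiv h (a, r)) t := by
  ext i
  by_cases h1 : i ∈ Sκ
  · simp [mergeQ, glueEquiv, h1, h h1]
  · by_cases h2 : i ∈ SW <;> simp [mergeQ, glueEquiv, compEquiv, h1, h2]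

/-- Summing over all bit strings is summing over their parts inside and outside `S`. -/
lemma sum_mergeQ (S : Finset (Fin n)) (f : QubitBasis n → ℂ) :
    ∑ x, f x = ∑ a, ∑ b, f (mergeQ S a b) := by
  rw [← Fintype.sum_prod_type', ← Equiv.sum_comp (Equiv.piEquivPiSubtypeProd (· ∈ S) _).symm]
  rfl

lemma embedQ_mergeQ (S : Finset (Fin n))
    (W : Matrix ({i : Fin n // i ∈ S} → Fin 2) ({i : Fin n // i ∈ S} → Fin 2) ℂ)
    (x y : {i : Fin n // i ∈ S} → Fin 2) (t s : {i : Fin n // i ∉ S} → Fin 2) :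
    embedQ S W (mergeQ S x t) (mergeQ S y s) = if t = s then W x y else 0 := by
  have h1 : (∀ i : {i : Fin n // i ∉ S}, mergeQ S x t i.1 = mergeQ S y s i.1) ↔ t = s := by
    rw [funext_iff]
    refine forall_congr' fun i => ?_
    simp [mergeQ, i.2]
  have h2 : ∀ (x : {i : Fin n // i ∈ S} → Fin 2) (t : {i : Fin n // i ∉ S} → Fin 2),
      (fun i : {i : Fin n // i ∈ S} => mergeQ S x t i.1) = x := by
    intro x t
    ext i
    simp [mergeQ]
  simp only [embedQ, Matrix.of_apply, h1, h2]
  simp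

/-- Conjugating by an operator on `S` commutes with tracing out the qubits outside `S`. -/
lemma ptraceCompl_conj (S : Finset (Fin n))
    (W : Matrix ({i : Fin n // i ∈ S} → Fin 2) ({i : Fin n // i ∈ S} → Fin 2) ℂ)
    (ρ : Matrix (QubitBasis n) (QubitBasis n) ℂ) :
    ptraceCompl S (embedQ S W * ρ * star (embedQ S W)) = W * ptraceCompl S ρ * star W := by
  ext x y
  simp only [ptraceCompl, Matrix.of_apply, Matrix.mul_apply, Matrix.star_apply,
    sum_mergeQ S, embedQ_mergeQ]
  simp only [apply_ite star, star_zero, mul_ite, mul_zero, ite_mul, zero_mul, Finset.sum_ite_eq,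
    Finset.mem_univ, if_true, Finset.sum_mul, Finset.mul_sum]
  rw [Finset.sum_comm]
  refine Finset.sum_congr rfl fun y' _ => ?_
  rw [Finset.sum_comm]

/-- The partial trace onto `Sκ` factors through the partial trace onto `SW`. -/
lemma ptraceCompl_trans {SW Sκ : Finset (Fin n)} (h : Sκ ⊆ SW)
    (M : Matrix (QubitBasis n) (QubitBasis n) ℂ) :
    ptraceCompl Sκ M = ptr (glueEquiv h) (ptraceCompl SW M) := by
  ext a b
  simp only [ptraceCompl, ptr, Matrix.of_apply]
  rw [← Equiv.sum_comp (compEquiv h), Fintype.sum_prod_type]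
  simp only [mergeQ_comp]

lemma ptraceCompl_herm (S : Finset (Fin n)) (ρ : Matrix (QubitBasis n) (QubitBasis n) ℂ)
    (hρ : ρ.IsHermitian) : (ptraceCompl S ρ).IsHermitian := by
  ext a b
  simp only [ptraceCompl, Matrix.conjTranspose_apply, Matrix.of_apply, star_sum]
  exact Finset.sum_congr rfl fun r _ => hρ.apply _ _

lemma ptraceCompl_trace (S : Finset (Fin n)) (ρ : Matrix (QubitBasis n) (QubitBasis n) ℂ) :
    (ptraceCompl S ρ).trace = ρ.trace := by
  simp only [ptraceCompl, Matrix.trace, Matrix.diag_apply, Matrix.of_apply]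
  rw [sum_mergeQ S]

end qubits

end HaarBlock

/-- Let `W`, `W′` be independent Haar random unitaries on `U(2^m)`
(modeled by the product measure `μ.prod μ`), acting on the `m`-qubit subset `S_W` of an
`n`-qubit system (extended by the identity elsewhere), let `S_κ ⊆ S_W` have `n_κ` qubits
(`n_κ ≥ 1`), and let `ρ`, `ρ′` be density matrices on `n` qubits.  For
`k = Tr[Tr_{S̄_κ}[W̃ ρ W̃†]·Tr_{S̄_κ}[W̃′ ρ′ W̃′†]]`,
`Var[k] = (2^{2m}(2^{2n_κ} − 1)/((2^{2m} − 1)²·2^{2n_κ}))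
  ·(Tr[(Tr_{S̄_W}[ρ])²] − 2^{−m})·(Tr[(Tr_{S̄_W}[ρ′])²] − 2^{−m})`,
and the variance vanishes exactly when one of the reduced states `Tr_{S̄_W}[ρ]`,
`Tr_{S̄_W}[ρ′]` is the completely mixed state on `S_W`. -/
theorem haar_block_variance_projected_kernel
    (n m nκ : ℕ) (hnκ : 0 < nκ) (SW Sκ : Finset (Fin n)) (hm : SW.card = m)
    (hκW : Sκ ⊆ SW) (hκ : Sκ.card = nκ)
    (μ : Measure (Matrix.unitaryGroup ({i : Fin n // i ∈ SW} → Fin 2) ℂ))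
    [μ.IsHaarMeasure] [IsProbabilityMeasure μ]
    (ρ ρ' : Matrix (QubitBasis n) (QubitBasis n) ℂ)
    (hρ : ρ.PosSemidef) (hρt : ρ.trace = 1)
    (hρ' : ρ'.PosSemidef) (hρt' : ρ'.trace = 1) :
    ProbabilityTheory.variance
        (fun p : Matrix.unitaryGroup ({i : Fin n // i ∈ SW} → Fin 2) ℂ ×
            Matrix.unitaryGroup ({i : Fin n // i ∈ SW} → Fin 2) ℂ =>
          ((ptraceCompl Sκ
              (embedQ SW (p.1 : Matrix ({i : Fin n // i ∈ SW} → Fin 2)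
                  ({i : Fin n // i ∈ SW} → Fin 2) ℂ) * ρ *
                star (embedQ SW (p.1 : Matrix ({i : Fin n // i ∈ SW} → Fin 2)
                  ({i : Fin n // i ∈ SW} → Fin 2) ℂ))) *
            ptraceCompl Sκ
              (embedQ SW (p.2 : Matrix ({i : Fin n // i ∈ SW} → Fin 2)
                  ({i : Fin n // i ∈ SW} → Fin 2) ℂ) * ρ' *
                star (embedQ SW (p.2 : Matrix ({i : Fin n // i ∈ SW} → Fin 2)
                  ({i : Fin n // i ∈ SW} → Fin 2) ℂ)))).trace).re)
        (μ.prod μ)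
      = ((2 : ℝ) ^ (2 * m) * ((2 : ℝ) ^ (2 * nκ) - 1) /
            (((2 : ℝ) ^ (2 * m) - 1) ^ 2 * (2 : ℝ) ^ (2 * nκ))) *
          (((ptraceCompl SW ρ * ptraceCompl SW ρ).trace).re - ((2 : ℝ) ^ m)⁻¹) *
          (((ptraceCompl SW ρ' * ptraceCompl SW ρ').trace).re - ((2 : ℝ) ^ m)⁻¹) ∧
    (ProbabilityTheory.variance
        (fun p : Matrix.unitaryGroup ({i : Fin n // i ∈ SW} → Fin 2) ℂ ×
            Matrix.unitaryGroup ({i : Fin n // i ∈ SW} → Fin 2) ℂ =>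
          ((ptraceCompl Sκ
              (embedQ SW (p.1 : Matrix ({i : Fin n // i ∈ SW} → Fin 2)
                  ({i : Fin n // i ∈ SW} → Fin 2) ℂ) * ρ *
                star (embedQ SW (p.1 : Matrix ({i : Fin n // i ∈ SW} → Fin 2)
                  ({i : Fin n // i ∈ SW} → Fin 2) ℂ))) *
            ptraceCompl Sκ
              (embedQ SW (p.2 : Matrix ({i : Fin n // i ∈ SW} → Fin 2)
                  ({i : Fin n // i ∈ SW} → Fin 2) ℂ) * ρ' *
                star (embedQ SW (p.2 : Matrix ({i : Fin n // i ∈ SW} → Fin 2)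
                  ({i : Fin n // i ∈ SW} → Fin 2) ℂ)))).trace).re)
        (μ.prod μ) = 0 ↔
      ptraceCompl SW ρ = ((2 : ℂ) ^ m)⁻¹ •
          (1 : Matrix ({i : Fin n // i ∈ SW} → Fin 2) ({i : Fin n // i ∈ SW} → Fin 2) ℂ) ∨
      ptraceCompl SW ρ' = ((2 : ℂ) ^ m)⁻¹ •
          (1 : Matrix ({i : Fin n // i ∈ SW} → Fin 2) ({i : Fin n // i ∈ SW} → Fin 2) ℂ)) := by
  have hle : nκ ≤ m := by rw [← hm, ← hκ]; exact Finset.card_le_card hκW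
  have hcJ : Fintype.card ({i : Fin n // i ∈ SW} → Fin 2) = 2 ^ m := by
    simp [hm]
  have hcK : Fintype.card ({i : Fin n // i ∈ Sκ} → Fin 2) = 2 ^ nκ := by
    simp [hκ]
  have hd : 1 < Fintype.card ({i : Fin n // i ∈ SW} → Fin 2) := by
    rw [hcJ]; exact Nat.one_lt_two_pow (by omega)
  have hJ : (2 : ℝ) ^ m = 2 ^ nκ * (Fintype.card (HaarBlock.RestBasis SW Sκ) : ℝ) := by
    have := Fintype.card_congr (HaarBlock.glueEquiv hκW)
    rw [Fintype.card_prod, hcJ, hcK] at this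
    exact_mod_cast this.symm
  have hA := (HaarBlock.ptraceCompl_trace SW ρ).trans hρt
  have hA' := (HaarBlock.ptraceCompl_trace SW ρ').trans hρt'
  have hAh := HaarBlock.ptraceCompl_herm SW ρ hρ.isHermitian
  have hAh' := HaarBlock.ptraceCompl_herm SW ρ' hρ'.isHermitian
  have hvar := HaarBlock.variance_ker μ (HaarBlock.glueEquiv hκW) _ _ hA hA' hAh hAh' hd
  have hp := HaarBlock.purity_eq_iff _ hA hAh
  have hp' := HaarBlock.purity_eq_iff _ hA' hAh'
  simp only [HaarBlock.ker, HaarBlock.conjU, ← HaarBlock.ptraceCompl_conj,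
    ← HaarBlock.ptraceCompl_trans] at hvar
  rw [hcJ] at hp hp'
  rw [hcJ, hcK] at hvar
  push_cast at hp hp' hvar
  have hm1 : (1 : ℝ) < 2 ^ (2 * m) := one_lt_pow₀ (by norm_num) (by omega)
  have hk1 : (1 : ℝ) < 2 ^ (2 * nκ) := one_lt_pow₀ (by norm_num) (by omega)
  have hm0 : (2 : ℝ) ^ (2 * m) - 1 ≠ 0 := by linarith
  have hk0 : (2 : ℝ) ^ (2 * nκ) - 1 ≠ 0 := by linarith
  have hform := hvar.trans (b := _) (c := ((2 : ℝ) ^ (2 * m) * ((2 : ℝ) ^ (2 * nκ) - 1) /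
            (((2 : ℝ) ^ (2 * m) - 1) ^ 2 * (2 : ℝ) ^ (2 * nκ))) *
          (((ptraceCompl SW ρ * ptraceCompl SW ρ).trace).re - ((2 : ℝ) ^ m)⁻¹) *
          (((ptraceCompl SW ρ' * ptraceCompl SW ρ').trace).re - ((2 : ℝ) ^ m)⁻¹)) (by
    have e1 : (2 : ℝ) ^ (2 * m) = (2 ^ m) ^ 2 := by rw [← pow_mul, mul_comm]
    have e2 : (2 : ℝ) ^ (2 * nκ) = (2 ^ nκ) ^ 2 := by rw [← pow_mul, mul_comm]
    have hR : (Fintype.card (HaarBlock.RestBasis SW Sκ) : ℝ) = 2 ^ m / 2 ^ nκ := by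
      rw [hJ]; field_simp
    rw [e1] at hm0
    rw [hR, e1, e2]
    generalize ((ptraceCompl SW ρ * ptraceCompl SW ρ).trace).re - ((2 : ℝ) ^ m)⁻¹ = u
    generalize ((ptraceCompl SW ρ' * ptraceCompl SW ρ').trace).re - ((2 : ℝ) ^ m)⁻¹ = v
    have hk : (2 : ℝ) ^ nκ ≠ 0 := by positivity
    generalize (2 : ℝ) ^ nκ = k at *
    generalize (2 : ℝ) ^ m = d at *
    field_simp)
  refine ⟨hform, ?_⟩
  rw [hform, mul_eq_zero, mul_eq_zero, hp, hp']
  have hc : ((2 : ℝ) ^ (2 * m) * ((2 : ℝ) ^ (2 * nκ) - 1) /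
            (((2 : ℝ) ^ (2 * m) - 1) ^ 2 * (2 : ℝ) ^ (2 * nκ))) ≠ 0 := by positivity
  simp only [hc, false_or]
end

section
/- Let H = H_S ⊗ H_{S̄} be a bipartite space, let S_h be a tensor factor of H_S and S_h̄ a tensor factor of H_{S̄}, each of dimension D, and set S_w = S_h ⊗ S_h̄ (of dimension d = D²). Let μ be the normalized Haar probability measure on U(d), and for w ∈ U(d) let w̃ denote w acting on S_w tensored with the identity on the rest of H. Then for any operator A on H, ∫ Tr[(Tr_{S̄}[w̃ A w̃†])²] dμ(w) = (D/(D² + 1))·( Tr[(Tr_{S̄ ∪ S_h}[A])²] + Tr[(Tr_{S̄ ∖ S_h̄}[A])²] ), where Tr_{S̄ ∪ S_h} is the partial trace over H_{S̄} and S_h, and Tr_{S̄ ∖ S_h̄} is the partial trace over the tensor complement of S_h̄ in H_{S̄}. -/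
/-!
The integrand is a quadratic form in the entries of `w ⊗ w̄`, so the claim reduces to the fourth
moments `M a b c d = ∫ w_{ap} w̄_{bq} w_{cr} w̄_{ds} dμ(w)` of the entries of a Haar unitary, with
the column indices `p, q, r, s` fixed. Left invariance of `μ` is enough to determine their shape in
the row indices:

* diagonal phases force `M a b c d = 0` unless `{a, c} = {b, d}` (`haarMoment_eq_zero`);
* permutation matrices make `M a a c c` and `M a c c a` independent of `a ≠ c`
  (`haarMoment_perm`);
* a unitary square root of a transposition gives `M a a a a = M a a c c + M a c c a`
  (`haarMoment_diag`).

Hence `M a b c d = α δ_{ab} δ_{cd} + β δ_{ad} δ_{bc}` (`haarMoment_eq`). With `d = D²`, unitarity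
of `w` gives `α d² + β d = δ_{pq} δ_{rs}` and `α d + β d² = δ_{ps} δ_{qr}`. The contraction of row
indices occurring in the purity equals `D³ (α + β)`, and adding the two relations determines
`α + β` without inverting the Weingarten matrix, so that `d = 1` needs no separate treatment
(`sum_haarMoment_straddle`). The two Kronecker terms, contracted with `A`, are the two purities on
the right-hand side.
-/

open MeasureTheory Matrix

/-- `H = (H_h ⊗ H_{s'}) ⊗ (H_{h̄} ⊗ H_{b'})`, with `H_S = H_h ⊗ H_{s'}` and
`H_{S̄} = H_{h̄} ⊗ H_{b'}`.  A unitary `w` on `S_w = S_h ⊗ S_{h̄}` extended by the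
identity on the remaining factors. -/
noncomputable def embedHW {h s' hb b' : Type*} [DecidableEq s'] [DecidableEq b']
    (w : Matrix (h × hb) (h × hb) ℂ) :
    Matrix ((h × s') × (hb × b')) ((h × s') × (hb × b')) ℂ :=
  Matrix.of fun x y =>
    w (x.1.1, x.2.1) (y.1.1, y.2.1) * (if x.1.2 = y.1.2 ∧ x.2.2 = y.2.2 then 1 else 0)

/-- Partial trace `Tr_{S̄}` over the factor `H_{S̄} = H_{h̄} ⊗ H_{b'}`. -/
noncomputable def ptraceSbar16 {h s' hb b' : Type*} [Fintype hb] [Fintype b']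
    (A : Matrix ((h × s') × (hb × b')) ((h × s') × (hb × b')) ℂ) :
    Matrix (h × s') (h × s') ℂ :=
  Matrix.of fun p q => ∑ x : hb, ∑ u : b', A (p, (x, u)) (q, (x, u))

/-- Partial trace `Tr_{S̄ ∪ S_h}` over `H_{S̄}` and `H_h`. -/
noncomputable def ptraceSbarCupH {h s' hb b' : Type*} [Fintype h] [Fintype hb] [Fintype b']
    (A : Matrix ((h × s') × (hb × b')) ((h × s') × (hb × b')) ℂ) :
    Matrix s' s' ℂ :=
  Matrix.of fun a b => ∑ i : h, ∑ x : hb, ∑ u : b', A ((i, a), (x, u)) ((i, b), (x, u))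

/-- Partial trace `Tr_{S̄ ∖ S_h̄}` over the tensor complement `H_{b'}` of `S_h̄` in
`H_{S̄}`, keeping `H_S ⊗ S_h̄`. -/
noncomputable def ptraceSbarDiffHbar {h s' hb b' : Type*} [Fintype b']
    (A : Matrix ((h × s') × (hb × b')) ((h × s') × (hb × b')) ℂ) :
    Matrix ((h × s') × hb) ((h × s') × hb) ℂ :=
  Matrix.of fun p q => ∑ u : b', A (p.1, (p.2, u)) (q.1, (q.2, u))

/-! ### Fourth moments of a Haar unitary -/

section
variable {n : Type*} [Fintype n] [DecidableEq n]

/-- The fourth moment `∫ w_{ap} w̄_{bq} w_{cr} w̄_{ds} dμ(w)` of the matrix entries; the column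
indices `p q r s` come first, since they stay fixed while the row indices `a b c d` vary. -/
noncomputable def haarMoment (μ : Measure (Matrix.unitaryGroup n ℂ)) (p q r s a b c d : n) : ℂ :=
  ∫ w : Matrix.unitaryGroup n ℂ,
    (w : Matrix n n ℂ) a p * star ((w : Matrix n n ℂ) b q) *
      ((w : Matrix n n ℂ) c r * star ((w : Matrix n n ℂ) d s)) ∂μ

variable (μ : Measure (Matrix.unitaryGroup n ℂ))

lemma haarMoment_integrable [IsProbabilityMeasure μ] (p q r s a b c d : n) :
    Integrable (fun w : Matrix.unitaryGroup n ℂ =>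
      (w : Matrix n n ℂ) a p * star ((w : Matrix n n ℂ) b q) *
      ((w : Matrix n n ℂ) c r * star ((w : Matrix n n ℂ) d s))) μ := by
  have hc : ∀ i j : n, Continuous fun w : Matrix.unitaryGroup n ℂ => (w : Matrix n n ℂ) i j :=
    fun i j => continuous_subtype_val.matrix_elem i j
  have hb : ∀ (w : Matrix.unitaryGroup n ℂ) (i j : n), ‖(w : Matrix n n ℂ) i j‖ ≤ 1 :=
    fun w i j => entry_norm_bound_of_unitary w.2 i j
  refine Integrable.of_bound (C := 1) (Continuous.aestronglyMeasurable ?_) (.of_forall fun w => ?_)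
  · exact ((hc a p).mul (hc b q).star).mul ((hc c r).mul (hc d s).star)
  · simp only [norm_mul, norm_star]
    have h1 := mul_le_one₀ (hb w a p) (norm_nonneg _) (hb w b q)
    have h2 := mul_le_one₀ (hb w c r) (norm_nonneg _) (hb w d s)
    exact mul_le_one₀ h1 (by positivity) h2

lemma sum_haarMoment_aabb [IsProbabilityMeasure μ] (p q r s : n) :
    ∑ a, ∑ c, haarMoment μ p q r s a a c c = if p = q ∧ r = s then 1 else 0 := by
  have hcol : ∀ (w : Matrix.unitaryGroup n ℂ) (i j : n),
      ∑ a, (w : Matrix n n ℂ) a i * star ((w : Matrix n n ℂ) a j) = if i = j then 1 else 0 := by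
    intro w i j
    have h := congrFun (congrFun (Matrix.mem_unitaryGroup_iff'.1 w.2) j) i
    rw [Matrix.mul_apply, Matrix.one_apply] at h
    simp only [eq_comm (a := j)] at h
    rw [← h]
    exact Finset.sum_congr rfl fun a _ => by rw [mul_comm]; rfl
  simp only [haarMoment]
  simp only [← integral_finsetSum _ fun c _ => haarMoment_integrable μ p q r s _ _ c c]
  rw [← integral_finsetSum _ fun a _ => integrable_finsetSum _ fun c _ =>
    haarMoment_integrable μ p q r s a a c c]
  simp only [← Finset.mul_sum, ← Finset.sum_mul, hcol]
  by_cases h1 : p = q <;> by_cases h2 : r = s <;> simp [h1, h2]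

/-- Exchanging the two conjugated factors reduces this to `sum_haarMoment_aabb`. -/
lemma sum_haarMoment_abba [IsProbabilityMeasure μ] (p q r s : n) :
    ∑ a, ∑ b, haarMoment μ p q r s a b b a = if p = s ∧ q = r then 1 else 0 := by
  have h : ∀ a b, haarMoment μ p q r s a b b a = haarMoment μ p s r q a a b b := by
    intro a b
    simp only [haarMoment]
    congr 1; ext w; ring
  simp only [h, sum_haarMoment_aabb, eq_comm (a := r)]
variable [μ.IsHaarMeasure]

/-- Left invariance of `μ`: replacing `w` by `v * w` does not change the moments. -/
lemma haarMoment_mul_left (v : Matrix.unitaryGroup n ℂ) (p q r s a b c d : n) :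
    haarMoment μ p q r s a b c d = ∫ w : Matrix.unitaryGroup n ℂ,
      ((v : Matrix n n ℂ) * (w : Matrix n n ℂ)) a p *
        star (((v : Matrix n n ℂ) * (w : Matrix n n ℂ)) b q) *
      (((v : Matrix n n ℂ) * (w : Matrix n n ℂ)) c r *
        star (((v : Matrix n n ℂ) * (w : Matrix n n ℂ)) d s)) ∂μ :=
  (integral_mul_left_eq_self (μ := μ) (fun w : Matrix.unitaryGroup n ℂ =>
    (w : Matrix n n ℂ) a p * star ((w : Matrix n n ℂ) b q) *
      ((w : Matrix n n ℂ) c r * star ((w : Matrix n n ℂ) d s))) v).symm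

lemma haarMoment_phase (z : n → ℂ) (hz : ∀ i, z i * star (z i) = 1) (p q r s a b c d : n) :
    haarMoment μ p q r s a b c d =
      z a * star (z b) * (z c * star (z d)) * haarMoment μ p q r s a b c d := by
  have hv : Matrix.diagonal z ∈ Matrix.unitaryGroup n ℂ := by
    rw [Matrix.mem_unitaryGroup_iff, Matrix.star_eq_conjTranspose, Matrix.diagonal_conjTranspose,
      Matrix.diagonal_mul_diagonal, ← Matrix.diagonal_one]
    exact congrArg _ (funext hz)
  conv_lhs => rw [haarMoment_mul_left μ ⟨_, hv⟩]
  rw [haarMoment, ← integral_const_mul]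
  simp only [Matrix.diagonal_mul, star_mul']
  congr 1; ext w; ring

lemma haarMoment_perm (σ : Equiv.Perm n) (p q r s a b c d : n) :
    haarMoment μ p q r s a b c d = haarMoment μ p q r s (σ a) (σ b) (σ c) (σ d) := by
  have hv : Equiv.Perm.permMatrix ℂ σ ∈ Matrix.unitaryGroup n ℂ := by
    rw [Matrix.mem_unitaryGroup_iff, Matrix.star_eq_conjTranspose, Matrix.conjTranspose_permMatrix,
      ← Matrix.permMatrix_mul]
    simp
  have h : ∀ (w : Matrix n n ℂ) i j, (Equiv.Perm.permMatrix ℂ σ * w) i j = w (σ i) j := by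
    intro w i j
    rw [PEquiv.toMatrix_toPEquiv_mul]; rfl
  rw [haarMoment_mul_left μ ⟨_, hv⟩]
  simp only [h, haarMoment]

/-- The moments vanish unless the row indices of `w` and of `w̄` agree as multisets: multiplying
one suitable row by `i` multiplies the moment by `i` or `-1`. -/
lemma haarMoment_eq_zero (p q r s a b c d : n) (h1 : ¬ (a = b ∧ c = d)) (h2 : ¬ (a = d ∧ b = c)) :
    haarMoment μ p q r s a b c d = 0 := by
  let z : n → n → ℂ := fun k i => if i = k then Complex.I else 1
  have key : ∀ k, z k a * star (z k b) * (z k c * star (z k d)) ≠ 1 →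
      haarMoment μ p q r s a b c d = 0 := by
    intro k hk
    have h := haarMoment_phase μ (z k) (fun i => by simp only [z]; split_ifs <;> simp)
      p q r s a b c d
    exact (mul_eq_zero.1 (show (z k a * star (z k b) * (z k c * star (z k d)) - 1) *
      haarMoment μ p q r s a b c d = 0 by linear_combination - h)).resolve_left (sub_ne_zero.2 hk)
  by_cases hab : a = b
  · have hdc : d ≠ c := fun h => h1 ⟨hab, h.symm⟩
    subst hab
    apply key c
    by_cases hac : a = c <;> simp [z, hac, hdc, Complex.ext_iff]
  · by_cases had : a = d
    · have hbc : b ≠ c := fun h => h2 ⟨had, h⟩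
      subst had
      apply key c
      by_cases hac : a = c <;> simp [z, hac, hbc, Complex.ext_iff]
    · apply key a
      by_cases hca : c = a <;> simp [z, hca, Ne.symm hab, Ne.symm had, Complex.ext_iff]
      norm_num

/-- With `P` the transposition of rows `a` and `c`, invariance under the unitary
`(1 + i)/2 • 1 + (1 - i)/2 • P`, a square root of `P`, expresses `M a a a a` as the average of
itself and `M a a c c + M a c c a`. -/
lemma haarMoment_diag [IsProbabilityMeasure μ] (p q r s : n) {a c : n} (hac : a ≠ c) :
    haarMoment μ p q r s a a a a = haarMoment μ p q r s a a c c + haarMoment μ p q r s a c c a := by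
  let x : ℂ := (1 + Complex.I) / 2
  let y : ℂ := (1 - Complex.I) / 2
  let P : Matrix n n ℂ := Equiv.Perm.permMatrix ℂ (Equiv.swap a c)
  have hPs : star P = P := by
    simp only [P, Matrix.star_eq_conjTranspose, Matrix.conjTranspose_permMatrix, Equiv.swap_inv]
  have hPP : P * P = 1 := by
    simp only [P]
    rw [← Matrix.permMatrix_mul, Equiv.swap_mul_self, Matrix.permMatrix_one]
  have hv : x • (1 : Matrix n n ℂ) + y • P ∈ Matrix.unitaryGroup n ℂ := by
    rw [Matrix.mem_unitaryGroup_iff, star_add, star_smul, star_smul, hPs, star_one]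
    have h1 : x * star x + y * star y = 1 := by
      apply Complex.ext <;> simp [x, y] <;> norm_num
    have h2 : x * star y + y * star x = 0 := by
      apply Complex.ext <;> simp [x, y] <;> norm_num
    simp only [add_mul, mul_add, smul_mul_smul_comm, mul_one, one_mul, hPP]
    calc _ = (x * star x + y * star y) • (1 : Matrix n n ℂ) + (x * star y + y * star x) • P := by
          module
      _ = 1 := by rw [h1, h2]; simp
  let z : Fin 2 → ℂ := ![x, y]
  let e : Fin 2 → n := ![a, c]
  have hrow : ∀ (w : Matrix n n ℂ) j,
      ((x • (1 : Matrix n n ℂ) + y • P) * w) a j = ∑ k, z k * w (e k) j := by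
    intro w j
    have : (P * w) a j = w c j := by
      simp only [P]
      rw [PEquiv.toMatrix_toPEquiv_mul]
      simp
    simp [Fin.sum_univ_two, z, e, add_mul, this]
  have hexp : haarMoment μ p q r s a a a a = ∑ i, ∑ j, ∑ k, ∑ l,
      z i * star (z j) * (z k * star (z l)) * haarMoment μ p q r s (e i) (e j) (e k) (e l) := by
    rw [haarMoment_mul_left μ ⟨_, hv⟩]
    simp only [hrow, haarMoment, ← integral_const_mul]
    have hi := fun i j k l => (haarMoment_integrable μ p q r s (e i) (e j) (e k) (e l)).const_mul
      (z i * star (z j) * (z k * star (z l)))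
    simp only [← integral_finsetSum _ fun l _ => hi _ _ _ l]
    simp only [← integral_finsetSum _ fun k _ => integrable_finsetSum _ fun l _ => hi _ _ k l]
    simp only [← integral_finsetSum _ fun j _ => integrable_finsetSum _ fun k _ =>
      integrable_finsetSum _ fun l _ => hi _ j k l]
    rw [← integral_finsetSum _ fun i _ => integrable_finsetSum _ fun j _ =>
      integrable_finsetSum _ fun k _ => integrable_finsetSum _ fun l _ => hi i j k l]
    congr 1; ext w
    simp only [Fin.sum_univ_two, star_add, star_mul']
    ring
  have hca := hac.symm
  have hsw := fun a' b' c' d' => haarMoment_perm μ (Equiv.swap a c) p q r s a' b' c' d'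
  have e1 := hsw a a a a
  have e2 := hsw a a c c
  have e3 := hsw a c c a
  simp only [Equiv.swap_apply_left, Equiv.swap_apply_right] at e1 e2 e3
  have hxx : x * star x = 1 / 2 := by apply Complex.ext <;> simp [x] <;> norm_num
  have hyy : y * star y = 1 / 2 := by apply Complex.ext <;> simp [y] <;> norm_num
  have hz := haarMoment_eq_zero μ p q r s
  simp only [Fin.sum_univ_two, z, e, Matrix.cons_val_zero, Matrix.cons_val_one,
    hz a a a c (by tauto) (by tauto), hz a a c a (by tauto) (by tauto),
    hz a c a a (by tauto) (by tauto), hz c a a a (by tauto) (by tauto),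
    hz a c a c (by tauto) (by tauto), hz c a c a (by tauto) (by tauto),
    hz c c c a (by tauto) (by tauto), hz c c a c (by tauto) (by tauto),
    hz c a c c (by tauto) (by tauto), hz a c c c (by tauto) (by tauto),
    ← e1, ← e2, ← e3] at hexp
  generalize haarMoment μ p q r s a a a a = M1 at *
  generalize haarMoment μ p q r s a a c c = M2 at *
  generalize haarMoment μ p q r s a c c a = M3 at *
  generalize star x = x' at *
  generalize star y = y' at *
  have hyx : x * y' * (y * x') = 1 / 4 := by linear_combination (x * x') * hyy + hxx / 2
  linear_combination 2 * hexp + 2 * (M1 * (x * x' + 1 / 2) + M2 * (2 * (y * y'))) * hxx +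
    2 * (M1 * (y * y' + 1 / 2) + M2) * hyy + 4 * M3 * hyx

/-- Shape of the fourth moments in the row indices. When `a = b = c = d` both terms contribute. -/
lemma haarMoment_eq [IsProbabilityMeasure μ] (p q r s : n) :
    ∃ α β : ℂ, ∀ a b c d, haarMoment μ p q r s a b c d =
      (if a = b ∧ c = d then α else 0) + (if a = d ∧ b = c then β else 0) := by
  by_cases hn : ∃ a₀ c₀ : n, a₀ ≠ c₀
  · obtain ⟨a₀, c₀, h₀⟩ := hn
    have htrans : ∀ a c : n, a ≠ c → ∃ σ : Equiv.Perm n, σ a = a₀ ∧ σ c = c₀ := by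
      intro a c hac
      refine ⟨Equiv.swap (Equiv.swap a a₀ c) c₀ * Equiv.swap a a₀, ?_, by simp⟩
      rw [Equiv.Perm.mul_apply, Equiv.swap_apply_left, Equiv.swap_apply_of_ne_of_ne _ h₀]
      intro h
      exact hac ((Equiv.swap a a₀).injective (by rw [Equiv.swap_apply_left]; exact h))
    have hα : ∀ a c : n, a ≠ c →
        haarMoment μ p q r s a a c c = haarMoment μ p q r s a₀ a₀ c₀ c₀ := by
      intro a c hac
      obtain ⟨σ, h1, h2⟩ := htrans a c hac
      rw [haarMoment_perm μ σ, h1, h2]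
    have hβ : ∀ a c : n, a ≠ c →
        haarMoment μ p q r s a c c a = haarMoment μ p q r s a₀ c₀ c₀ a₀ := by
      intro a c hac
      obtain ⟨σ, h1, h2⟩ := htrans a c hac
      rw [haarMoment_perm μ σ, h1, h2]
    refine ⟨haarMoment μ p q r s a₀ a₀ c₀ c₀, haarMoment μ p q r s a₀ c₀ c₀ a₀,
      fun a b c d => ?_⟩
    by_cases h1 : a = b ∧ c = d
    · obtain ⟨rfl, rfl⟩ := h1
      by_cases hac : a = c
      · subst hac
        obtain ⟨e, he⟩ : ∃ e, a ≠ e := by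
          by_cases h : a = a₀
          · exact ⟨c₀, h ▸ h₀⟩
          · exact ⟨a₀, h⟩
        simp [haarMoment_diag μ p q r s he, hα a e he, hβ a e he]
      · simp [hac, hα a c hac]
    · by_cases h2 : a = d ∧ b = c
      · obtain ⟨rfl, rfl⟩ := h2
        have hab : a ≠ b := fun h => h1 ⟨h, h.symm⟩
        simp [hab, hβ a b hab]
      · simp [h1, h2, haarMoment_eq_zero μ p q r s a b c d h1 h2]
  -- At most one row: only the value at the single index matters, so `β = 0` will do.
  · push Not at hn
    rcases isEmpty_or_nonempty n with h | ⟨⟨k⟩⟩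
    · exact ⟨0, 0, fun a => h.elim a⟩
    · refine ⟨haarMoment μ p q r s k k k k, 0, fun a b c d => ?_⟩
      simp [hn a k, hn b k, hn c k, hn d k]

end

/-! ### Contraction of the moments in the straddling pattern -/

/-- The contraction of row indices produced by `Tr[(Tr_{S̄} ·)²]`: the `h`-indices are those of a
product of two matrices under a trace, the `hb`-indices are traced separately in each factor. -/
lemma sum_haarMoment_straddle {h hb : Type*} [Fintype h] [Fintype hb] [DecidableEq h]
    [DecidableEq hb] (D : ℕ) (hDh : Fintype.card h = D) (hDhb : Fintype.card hb = D)
    (μ : Measure (Matrix.unitaryGroup (h × hb) ℂ)) [μ.IsHaarMeasure] [IsProbabilityMeasure μ]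
    (p q r s : h × hb) :
    ∑ i, ∑ j, ∑ x, ∑ y, haarMoment μ p q r s (i, x) (j, x) (j, y) (i, y) =
      (D : ℂ) / ((D : ℂ) ^ 2 + 1) *
        ((if p = q ∧ r = s then 1 else 0) + (if p = s ∧ q = r then 1 else 0)) := by
  obtain ⟨α, β, hM⟩ := haarMoment_eq μ p q r s
  rw [← sum_haarMoment_aabb μ, ← sum_haarMoment_abba μ]
  have hD : (D : ℂ) ^ 2 + 1 ≠ 0 := by norm_cast
  have h1 : ∑ a, ∑ c, haarMoment μ p q r s a a c c = α * D ^ 4 + β * D ^ 2 := by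
    simp only [hM, and_self, Finset.sum_add_distrib, Finset.sum_ite_eq, Finset.mem_univ,
      if_true, Finset.sum_const, Finset.card_univ, Fintype.card_prod, hDh, hDhb, nsmul_eq_mul]
    push_cast; ring
  have h2 : ∑ a, ∑ b, haarMoment μ p q r s a b b a = α * D ^ 2 + β * D ^ 4 := by
    have : ∀ a b : h × hb, (a = b ∧ b = a) ↔ a = b := fun a b => ⟨fun h => h.1, fun h => ⟨h, h.symm⟩⟩
    simp only [hM, this, and_self, Finset.sum_add_distrib, Finset.sum_ite_eq, Finset.mem_univ,
      if_true, Finset.sum_const, Finset.card_univ, Fintype.card_prod, hDh, hDhb, nsmul_eq_mul]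
    push_cast; ring
  have h3 : ∑ i, ∑ j, ∑ x, ∑ y, haarMoment μ p q r s (i, x) (j, x) (j, y) (i, y) =
      D ^ 3 * (α + β) := by
    have : ∀ a b : h, (a = b ∧ b = a) ↔ a = b := fun a b => ⟨fun h => h.1, fun h => ⟨h, h.symm⟩⟩
    simp only [hM, Prod.mk.injEq, and_true, true_and, and_self, this, Finset.sum_add_distrib,
      Finset.sum_ite_eq, Finset.mem_univ, if_true, Finset.sum_const, Finset.card_univ,
      hDh, hDhb, nsmul_eq_mul, smul_ite, smul_zero]
    ring
  rw [h1, h2, h3]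
  field_simp
  ring

/-! ### Expansion of the purity in the entries of `w` -/

/-- The partial trace of `A` over `b'`, as a matrix on `h × hb` for each pair `k l` of `s'`-indices:
the only form in which `A` enters either side of the identity. -/
noncomputable def traceBlock {h s' hb b' : Type*} [Fintype b']
    (A : Matrix ((h × s') × (hb × b')) ((h × s') × (hb × b')) ℂ) (k l : s') (p q : h × hb) : ℂ :=
  ∑ u : b', A ((p.1, k), (p.2, u)) ((q.1, l), (q.2, u))

lemma ptraceSbar16_conj_apply {h s' hb b' : Type*} [Fintype h] [Fintype s'] [Fintype hb]
    [Fintype b'] [DecidableEq s'] [DecidableEq b']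
    (A : Matrix ((h × s') × (hb × b')) ((h × s') × (hb × b')) ℂ)
    (w : Matrix (h × hb) (h × hb) ℂ) (i j : h) (k l : s') :
    ptraceSbar16 (embedHW w * A * embedHW (star w)) (i, k) (j, l) =
      ∑ X : hb × (h × hb) × (h × hb),
        w (i, X.1) X.2.1 * star (w (j, X.1) X.2.2) * traceBlock A k l X.2.1 X.2.2 := by
  have hL : ∀ (x : hb) (u : b') (c : (h × s') × (hb × b')),
      (embedHW w * A : Matrix ((h × s') × (hb × b')) ((h × s') × (hb × b')) ℂ) ((i, k), (x, u)) c =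
        ∑ p : h × hb, w (i, x) p * A ((p.1, k), (p.2, u)) c := by
    intro x u c
    rw [Matrix.mul_apply]
    simp only [embedHW, Matrix.of_apply, Fintype.sum_prod_type, mul_ite, mul_one, mul_zero, ite_mul,
      zero_mul, ite_and]
    refine Finset.sum_congr rfl fun a _ => ?_
    rw [Finset.sum_comm]
    simp
  have hR : ∀ (B : Matrix ((h × s') × (hb × b')) ((h × s') × (hb × b')) ℂ) (x : hb) (u : b')
      (c : (h × s') × (hb × b')),
      (B * embedHW (star w) : Matrix ((h × s') × (hb × b')) ((h × s') × (hb × b')) ℂ)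
        c ((j, l), (x, u)) = ∑ q : h × hb, B c ((q.1, l), (q.2, u)) * star (w (j, x) q) := by
    intro B x u c
    rw [Matrix.mul_apply]
    simp only [embedHW, Matrix.of_apply, Fintype.sum_prod_type, mul_ite, mul_one, mul_zero,
      ite_and, Matrix.star_apply]
    refine Finset.sum_congr rfl fun a _ => ?_
    rw [Finset.sum_comm]
    simp
  simp only [ptraceSbar16, Matrix.of_apply, hR, hL, traceBlock]
  rw [Fintype.sum_prod_type]
  refine Finset.sum_congr rfl fun x _ => ?_
  rw [Fintype.sum_prod_type]
  simp only [Finset.sum_mul, Finset.mul_sum]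
  rw [Finset.sum_comm]
  rw [Finset.sum_congr rfl fun q _ => Finset.sum_comm, Finset.sum_comm]
  refine Finset.sum_congr rfl fun p _ => Finset.sum_congr rfl fun q _ =>
    Finset.sum_congr rfl fun u _ => ?_
  ring

/-- With `S_h ⊆ S` and `S_h̄ ⊆ S̄` tensor factors each of dimension `D`
and `S_w = S_h ⊗ S_h̄` of dimension `d = D²`, for `μ` the normalized Haar probability
measure on `U(d)` and any operator `A` on `H`:
`∫ Tr[(Tr_{S̄}[w̃ A w̃†])²] dμ(w)
  = (D/(D² + 1))·(Tr[(Tr_{S̄ ∪ S_h}[A])²] + Tr[(Tr_{S̄ ∖ S_h̄}[A])²])`. -/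
theorem haar_straddling_block_average_purity
    (D : ℕ) (h s' hb b' : Type*) [Fintype h] [Fintype s'] [Fintype hb] [Fintype b']
    [DecidableEq h] [DecidableEq s'] [DecidableEq hb] [DecidableEq b']
    (hDh : Fintype.card h = D) (hDhb : Fintype.card hb = D)
    (μ : Measure (Matrix.unitaryGroup (h × hb) ℂ))
    [μ.IsHaarMeasure] [IsProbabilityMeasure μ]
    (A : Matrix ((h × s') × (hb × b')) ((h × s') × (hb × b')) ℂ) :
    ∫ w : Matrix.unitaryGroup (h × hb) ℂ,
        (ptraceSbar16 (embedHW (w : Matrix (h × hb) (h × hb) ℂ) * A *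
            embedHW (star (w : Matrix (h × hb) (h × hb) ℂ))) *
          ptraceSbar16 (embedHW (w : Matrix (h × hb) (h × hb) ℂ) * A *
            embedHW (star (w : Matrix (h × hb) (h × hb) ℂ)))).trace ∂μ
      = ((D : ℂ) / ((D : ℂ) ^ 2 + 1)) *
          ((ptraceSbarCupH A * ptraceSbarCupH A).trace +
            (ptraceSbarDiffHbar A * ptraceSbarDiffHbar A).trace) := by
  have hcup : (ptraceSbarCupH A * ptraceSbarCupH A).trace =
      ∑ k, ∑ l, ∑ p, ∑ r, traceBlock A k l p p * traceBlock A l k r r := by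
    have h : ∀ k l, ptraceSbarCupH A k l = ∑ p : h × hb, traceBlock A k l p p := fun k l => by
      simp only [ptraceSbarCupH, traceBlock, Matrix.of_apply, Fintype.sum_prod_type]
    simp only [Matrix.trace, Matrix.diag_apply, Matrix.mul_apply, h, Finset.sum_mul_sum]
  have hdiff : (ptraceSbarDiffHbar A * ptraceSbarDiffHbar A).trace =
      ∑ k, ∑ l, ∑ p, ∑ q, traceBlock A k l p q * traceBlock A l k q p := by
    simp only [Matrix.trace, Matrix.diag_apply, Matrix.mul_apply, ← Fintype.sum_prod_type']
    exact Fintype.sum_equiv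
      ⟨fun t => (t.1.1.2, t.2.1.2, (t.1.1.1, t.1.2), (t.2.1.1, t.2.2)),
        fun t => (((t.2.2.1.1, t.1), t.2.2.1.2), ((t.2.2.2.1, t.2.1), t.2.2.2.2)),
        fun _ => rfl, fun _ => rfl⟩ _ _ fun _ => rfl
  -- Index order: `((k, l, p, q, r, s), (i, j, x, y))`, the second group being the row indices
  -- that `sum_haarMoment_straddle` contracts.
  have hexpand : ∀ w : Matrix.unitaryGroup (h × hb) ℂ,
      (ptraceSbar16 (embedHW (w : Matrix (h × hb) (h × hb) ℂ) * A *
            embedHW (star (w : Matrix (h × hb) (h × hb) ℂ))) *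
          ptraceSbar16 (embedHW (w : Matrix (h × hb) (h × hb) ℂ) * A *
            embedHW (star (w : Matrix (h × hb) (h × hb) ℂ)))).trace =
      ∑ t : (s' × s' × (h × hb) × (h × hb) × (h × hb) × (h × hb)) × (h × h × hb × hb),
        traceBlock A t.1.1 t.1.2.1 t.1.2.2.1 t.1.2.2.2.1 *
          traceBlock A t.1.2.1 t.1.1 t.1.2.2.2.2.1 t.1.2.2.2.2.2 *
        ((w : Matrix (h × hb) (h × hb) ℂ) (t.2.1, t.2.2.2.1) t.1.2.2.1 *
            star ((w : Matrix (h × hb) (h × hb) ℂ) (t.2.2.1, t.2.2.2.1) t.1.2.2.2.1) *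
          ((w : Matrix (h × hb) (h × hb) ℂ) (t.2.2.1, t.2.2.2.2) t.1.2.2.2.2.1 *
            star ((w : Matrix (h × hb) (h × hb) ℂ) (t.2.1, t.2.2.2.2) t.1.2.2.2.2.2))) := by
    intro w
    have hmul : ∀ M : Matrix (h × s') (h × s') ℂ, (M * M).trace =
        ∑ P : h × s', ∑ Q : h × s', M (P.1, P.2) (Q.1, Q.2) * M (Q.1, Q.2) (P.1, P.2) :=
      fun M => rfl
    rw [hmul]
    simp only [ptraceSbar16_conj_apply, Finset.sum_mul_sum]
    simp only [← Fintype.sum_prod_type']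
    refine Fintype.sum_equiv
      ⟨fun t => ((t.1.2, t.2.1.2, t.2.2.1.2.1, t.2.2.1.2.2, t.2.2.2.2.1, t.2.2.2.2.2),
          (t.1.1, t.2.1.1, t.2.2.1.1, t.2.2.2.1)),
        fun t => ((t.2.1, t.1.1), (t.2.2.1, t.1.2.1), (t.2.2.2.1, t.1.2.2.1, t.1.2.2.2.1),
          (t.2.2.2.2, t.1.2.2.2.2.1, t.1.2.2.2.2.2)),
        fun _ => rfl, fun _ => rfl⟩ _ _ fun t => ?_
    simp only [Equiv.coe_fn_mk]
    ring
  simp only [hexpand]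
  rw [integral_finsetSum _ fun t _ => (haarMoment_integrable μ _ _ _ _ _ _ _ _).const_mul _]
  simp only [integral_const_mul]
  rw [Fintype.sum_prod_type]
  simp only [← Finset.mul_sum]
  have hs : ∀ p q r s : h × hb, ∑ t : h × h × hb × hb, ∫ w : Matrix.unitaryGroup (h × hb) ℂ,
      ((w : Matrix (h × hb) (h × hb) ℂ) (t.1, t.2.2.1) p * star ((w : Matrix (h × hb) (h × hb) ℂ) (t.2.1, t.2.2.1) q) *
        ((w : Matrix (h × hb) (h × hb) ℂ) (t.2.1, t.2.2.2) r *
          star ((w : Matrix (h × hb) (h × hb) ℂ) (t.1, t.2.2.2) s))) ∂μ =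
      (D : ℂ) / ((D : ℂ) ^ 2 + 1) *
        ((if p = q ∧ r = s then 1 else 0) + (if p = s ∧ q = r then 1 else 0)) := fun p q r s => by
    rw [← sum_haarMoment_straddle D hDh hDhb μ p q r s]
    simp only [Fintype.sum_prod_type, haarMoment]
  simp only [hs]
  rw [hcup, hdiff]
  simp only [Fintype.sum_prod_type (α₁ := s')]
  simp only [Fintype.sum_prod_type (α₁ := h × hb), ← Finset.sum_add_distrib,
    Finset.mul_sum (s := (Finset.univ : Finset s'))]
  refine Finset.sum_congr rfl fun k _ => Finset.sum_congr rfl fun l _ => ?_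
  have e1 : ∑ p, ∑ q, ∑ r, ∑ s, traceBlock A k l p q * traceBlock A l k r s *
      (if p = q ∧ r = s then (1 : ℂ) else 0) = ∑ p, ∑ r, traceBlock A k l p p * traceBlock A l k r r := by
    refine Finset.sum_congr rfl fun p _ => ?_
    rw [Finset.sum_eq_single p (fun q _ hq => by simp [hq.symm]) (by simp)]
    simp
  have e2 : ∑ p, ∑ q, ∑ r, ∑ s, traceBlock A k l p q * traceBlock A l k r s *
      (if p = s ∧ q = r then (1 : ℂ) else 0) = ∑ p, ∑ q, traceBlock A k l p q * traceBlock A l k q p := by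
    simp [ite_and]
  rw [Finset.sum_congr rfl fun p _ => Finset.sum_add_distrib, Finset.sum_add_distrib, ← e1, ← e2]
  simp only [← Finset.sum_add_distrib, Finset.mul_sum]
  refine Finset.sum_congr rfl fun p _ => Finset.sum_congr rfl fun q _ =>
    Finset.sum_congr rfl fun r _ => Finset.sum_congr rfl fun s _ => ?_
  ring
end

section
/- Let H = H_S ⊗ H_{S̄} be a bipartite space with dim H_S = D, let S_h̄ be a tensor factor of H_{S̄} of dimension D, and set S_w = S ⊗ S_h̄ (of dimension d = D²). Let μ be the normalized Haar probability measure on U(d), and for w ∈ U(d) let w̃ denote w acting on S_w tensored with the identity on the rest of H. Then for any operator A on H, ∫ Tr[(Tr_{S̄}[w̃ A w̃†])²] dμ(w) = (D/(D² + 1))·( Tr[A]² + Tr[(Tr_{S̄ ∖ S_h̄}[A])²] ), where Tr_{S̄ ∖ S_h̄} is the partial trace over the tensor complement of S_h̄ in H_{S̄}. -/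
/-!
Let `B = Tr_{b'} A`, an operator on `S_w`, and `M = w B w†`. Then `Tr_{S̄}[w̃ A w̃†]` is the partial
trace of `M` over the second factor, so the averaged purity is the sum over `i, j, x, y` of the
second moments `E[M (i,x) (j,x) * M (j,y) (i,y)]`. Left invariance of the Haar measure means that
the law of `M` is unchanged under `M ↦ u M u†` for every unitary `u`, and three kinds of `u` are
enough to determine the sum:

* a phase at one index kills every moment in which this index is unbalanced (`moment_eq_zero`), so
  only the terms with `i = j` or `x = y` survive;
* permutation matrices show that `c = E[(M p p)²]` does not depend on `p`, and that the two factors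
  may be exchanged, as they have the same dimension;
* a unitary mixing two basis vectors `p ≠ q` gives `E[M p p * M q q] + E[M p q * M q p] = c`
  (`moment_add`).

Hence the averaged purity is `D³ c` (`sum_moment_purity`). Since `Tr M = Tr B` and `Tr M² = Tr B²`
for every `w`, the same relations give `(Tr B)² + Tr B² = D² (D² + 1) c`
(`trace_sq_add_trace_mul_self`), and eliminating `c` yields the claim.
-/

open MeasureTheory Matrix

/-- `H = H_S ⊗ (H_{h̄} ⊗ H_{b'})` with `H_{S̄} = H_{h̄} ⊗ H_{b'}`.  A unitary `w` on
`S_w = S ⊗ S_{h̄}` extended by the identity on `H_{b'}`. -/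
noncomputable def embedSW {s hb b' : Type*} [DecidableEq b']
    (w : Matrix (s × hb) (s × hb) ℂ) :
    Matrix (s × (hb × b')) (s × (hb × b')) ℂ :=
  Matrix.of fun x y =>
    w (x.1, x.2.1) (y.1, y.2.1) * (if x.2.2 = y.2.2 then 1 else 0)

/-- Partial trace `Tr_{S̄}` over the factor `H_{S̄} = H_{h̄} ⊗ H_{b'}`. -/
noncomputable def ptraceSbar17 {s hb b' : Type*} [Fintype hb] [Fintype b']
    (A : Matrix (s × (hb × b')) (s × (hb × b')) ℂ) : Matrix s s ℂ :=
  Matrix.of fun i j => ∑ x : hb, ∑ u : b', A (i, (x, u)) (j, (x, u))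

/-- Partial trace `Tr_{S̄ ∖ S_h̄}` over the tensor complement `H_{b'}` of `S_h̄` in
`H_{S̄}`, keeping `H_S ⊗ S_h̄`. -/
noncomputable def ptraceSbarDiffHbar17 {s hb b' : Type*} [Fintype b']
    (A : Matrix (s × (hb × b')) (s × (hb × b')) ℂ) :
    Matrix (s × hb) (s × hb) ℂ :=
  Matrix.of fun p q => ∑ u : b', A (p.1, (p.2, u)) (q.1, (q.2, u))

/-- The conjugate `w B w†` of an operator by a unitary. -/
noncomputable def conjBy {n : Type*} [Fintype n] [DecidableEq n]
    (B : Matrix n n ℂ) (w : Matrix.unitaryGroup n ℂ) : Matrix n n ℂ :=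
  (w : Matrix n n ℂ) * B * star (w : Matrix n n ℂ)

/-- The second moment `E[M i k * M j l]` of the entries of `M = w B w†`, for `w` distributed
according to `μ`. -/
noncomputable def moment {n : Type*} [Fintype n] [DecidableEq n]
    (μ : Measure (Matrix.unitaryGroup n ℂ)) (B : Matrix n n ℂ) (i k j l : n) : ℂ :=
  ∫ w, conjBy B w i k * conjBy B w j l ∂μ

/-! ### Second moments of the entries of a random conjugate -/

section Moments

variable {n : Type*} [Fintype n] [DecidableEq n]

instance compactSpace_unitaryGroup : CompactSpace (Matrix.unitaryGroup n ℂ) := by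
  apply isCompact_iff_compactSpace.mp
  have hK : IsCompact (Set.pi Set.univ fun _ : n => Set.pi Set.univ fun _ : n =>
      Metric.closedBall (0 : ℂ) 1) :=
    isCompact_univ_pi fun _ => isCompact_univ_pi fun _ => isCompact_closedBall _ _
  refine hK.of_isClosed_subset ?_ ?_
  · have : ((Matrix.unitaryGroup n ℂ : Submonoid (Matrix n n ℂ)) : Set (Matrix n n ℂ))
        = {U | U * star U = 1} := by
      ext U
      exact Matrix.mem_unitaryGroup_iff
    rw [this]
    exact isClosed_eq (by fun_prop) continuous_const
  · intro U hU i _ j _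
    simpa using entry_norm_bound_of_unitary hU i j

lemma integrable_conjBy_mul (μ : Measure (Matrix.unitaryGroup n ℂ)) [IsFiniteMeasure μ]
    (B : Matrix n n ℂ) (i k j l : n) :
    Integrable (fun w => conjBy B w i k * conjBy B w j l) μ := by
  have hc : Continuous (conjBy B) := by
    unfold conjBy
    fun_prop
  have hc' : Continuous fun w => conjBy B w i k * conjBy B w j l :=
    (hc.matrix_elem i k).mul (hc.matrix_elem j l)
  exact hc'.integrable_of_hasCompactSupport (HasCompactSupport.of_compactSpace _)

lemma integral_conjBy_invariant (μ : Measure (Matrix.unitaryGroup n ℂ)) [μ.IsHaarMeasure]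
    (B : Matrix n n ℂ) (f : Matrix n n ℂ → ℂ) (u : Matrix n n ℂ) (hu : u * star u = 1) :
    ∫ w, f (u * conjBy B w * star u) ∂μ = ∫ w, f (conjBy B w) ∂μ := by
  let v : Matrix.unitaryGroup n ℂ := ⟨u, Matrix.mem_unitaryGroup_iff.mpr hu⟩
  rw [← integral_mul_left_eq_self (fun w => f (conjBy B w)) v]
  congr 1
  ext w
  simp [conjBy, v, Matrix.mul_assoc]

/-- Invariance of the moments under diagonal unitaries. -/
lemma moment_phase (μ : Measure (Matrix.unitaryGroup n ℂ)) [μ.IsHaarMeasure]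
    (B : Matrix n n ℂ) (φ : n → ℂ) (hφ : ∀ i, φ i * star (φ i) = 1) (i k j l : n) :
    moment μ B i k j l =
      (φ i * star (φ k) * (φ j * star (φ l))) * moment μ B i k j l := by
  have h := integral_conjBy_invariant μ B (fun M => M i k * M j l) (Matrix.diagonal φ) (by
    simp only [Matrix.star_eq_conjTranspose, Matrix.diagonal_conjTranspose,
      Matrix.diagonal_mul_diagonal, Pi.star_apply, hφ, Matrix.diagonal_one])
  unfold moment
  rw [← integral_const_mul]
  refine h.symm.trans ?_
  congr 1
  ext w
  simp only [Matrix.star_eq_conjTranspose, Matrix.diagonal_conjTranspose,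
    Matrix.mul_diagonal, Matrix.diagonal_mul, Pi.star_apply]
  ring

/-- A moment vanishes if the phase `I` placed at the single index `p` multiplies it by a
nontrivial factor. -/
lemma moment_eq_zero (μ : Measure (Matrix.unitaryGroup n ℂ)) [μ.IsHaarMeasure]
    (B : Matrix n n ℂ) (p i k j l : n)
    (h : (if i = p then Complex.I else 1) * (if k = p then -Complex.I else 1) *
      ((if j = p then Complex.I else 1) * (if l = p then -Complex.I else 1)) ≠ 1) :
    moment μ B i k j l = 0 := by
  have h1 := moment_phase μ B (fun i => if i = p then Complex.I else 1)
    (by intro i; by_cases hi : i = p <;> simp [hi]) i k j l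
  have hs : ∀ k : n, star (if k = p then Complex.I else 1) =
      (if k = p then -Complex.I else 1) := by
    intro k; by_cases hk : k = p <;> simp [hk]
  simp only [hs] at h1
  by_contra h0
  exact h (mul_right_cancel₀ h0 (by rw [one_mul]; exact h1.symm))

lemma moment_perm (μ : Measure (Matrix.unitaryGroup n ℂ)) [μ.IsHaarMeasure]
    (B : Matrix n n ℂ) (σ : Equiv.Perm n) (i k j l : n) :
    moment μ B (σ i) (σ k) (σ j) (σ l) = moment μ B i k j l := by
  have h := integral_conjBy_invariant μ B (fun M => M i k * M j l) (σ.permMatrix ℂ) (by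
    rw [Matrix.star_eq_conjTranspose, Matrix.conjTranspose_permMatrix,
      ← Matrix.permMatrix_mul]
    simp)
  unfold moment
  rw [← h]
  congr 1
  ext w
  rw [Matrix.star_eq_conjTranspose, Matrix.conjTranspose_permMatrix]
  simp [Equiv.Perm.permMatrix, PEquiv.mul_toMatrix_toPEquiv, PEquiv.toMatrix_toPEquiv_mul]
  rfl

lemma moment_diag_const (μ : Measure (Matrix.unitaryGroup n ℂ)) [μ.IsHaarMeasure]
    (B : Matrix n n ℂ) (p q : n) : moment μ B p p p p = moment μ B q q q q := by
  have h := moment_perm μ B (Equiv.swap p q) q q q q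
  simpa using h

/-- The relation between the three kinds of nonzero moments. It expresses invariance under the
unitary `α + β S`, with `S` the transposition of `p` and `q` and `α, β = (1 ± I) / 2`: it sends
the entry `M p p` to `(M p p + M q q + I * M p q - I * M q p) / 2`, whose square has
mean `E[(M p p)²]` again. -/
lemma moment_add (μ : Measure (Matrix.unitaryGroup n ℂ)) [μ.IsHaarMeasure]
    [IsProbabilityMeasure μ] (B : Matrix n n ℂ) {p q : n} (hpq : p ≠ q) :
    moment μ B p p q q + moment μ B p q q p = moment μ B p p p p := by
  set S : Matrix n n ℂ := (Equiv.swap p q).permMatrix ℂ with hS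
  have hSs : star S = S := by
    rw [hS, Matrix.star_eq_conjTranspose, Matrix.conjTranspose_permMatrix, Equiv.swap_inv]
  have hSS : S * S = 1 := by
    rw [hS, ← Matrix.permMatrix_mul, Equiv.swap_mul_self, Matrix.permMatrix_one]
  set u : Matrix n n ℂ := ((1 + Complex.I) / 2) • (1 : Matrix n n ℂ) +
    ((1 - Complex.I) / 2) • S with hu
  have hus : star u = ((1 - Complex.I) / 2) • (1 : Matrix n n ℂ) +
      ((1 + Complex.I) / 2) • S := by
    rw [hu, star_add, star_smul, star_smul, hSs, star_one]
    simp [sub_eq_add_neg]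
  have huu : u * star u = 1 := by
    rw [hus, hu]
    simp only [add_mul, mul_add, Matrix.smul_mul, Matrix.mul_smul, mul_one, one_mul, hSS,
      smul_smul]
    have h1 : (1 - Complex.I) / 2 * ((1 + Complex.I) / 2) = 1 / 2 := by
      linear_combination (-1 / 4 : ℂ) * Complex.I_sq
    have h2 : (1 + Complex.I) / 2 * ((1 + Complex.I) / 2) = Complex.I / 2 := by
      linear_combination (1 / 4 : ℂ) * Complex.I_sq
    have h3 : (1 - Complex.I) / 2 * ((1 - Complex.I) / 2) = -Complex.I / 2 := by
      linear_combination (1 / 4 : ℂ) * Complex.I_sq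
    rw [mul_comm ((1 + Complex.I) / 2) ((1 - Complex.I) / 2), h1, h2, h3]
    module
  have h := integral_conjBy_invariant μ B (fun M => M p p * M p p) u huu
  have hentry : ∀ M : Matrix n n ℂ, (u * M * star u) p p =
      (1 / 2) * (M p p + M q q) + (Complex.I / 2) * (M p q - M q p) := by
    intro M
    have e1 : ∀ (N : Matrix n n ℂ) (i j : n), (S * N) i j = N (Equiv.swap p q i) j := by
      intro N i j
      simp [hS, Equiv.Perm.permMatrix, PEquiv.toMatrix_toPEquiv_mul]
    have e2 : ∀ (N : Matrix n n ℂ) (i j : n), (N * S) i j = N i (Equiv.swap p q j) := by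
      intro N i j
      simp [hS, Equiv.Perm.permMatrix, PEquiv.mul_toMatrix_toPEquiv]
    rw [hus, hu]
    simp only [add_mul, mul_add, Matrix.smul_mul, Matrix.mul_smul, mul_one, one_mul,
      Matrix.add_apply, Matrix.smul_apply, e1, e2, Equiv.swap_apply_left, smul_eq_mul]
    linear_combination (-1 / 4 * M p p - 1 / 4 * M q q + 1 / 4 * M p q + 1 / 4 * M q p) *
      Complex.I_sq
  simp only [hentry] at h
  have hexp : ∀ M : Matrix n n ℂ,
      ((1 / 2) * (M p p + M q q) + (Complex.I / 2) * (M p q - M q p)) *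
        ((1 / 2) * (M p p + M q q) + (Complex.I / 2) * (M p q - M q p)) =
      (1 / 4) * (M p p * M p p) + (1 / 4) * (M q q * M q q) + (1 / 2) * (M p p * M q q) +
      (1 / 2) * (M p q * M q p) + (-1 / 4) * (M p q * M p q) + (-1 / 4) * (M q p * M q p) +
      (Complex.I / 2) * (M p p * M p q) + (-Complex.I / 2) * (M p p * M q p) +
      (Complex.I / 2) * (M q q * M p q) + (-Complex.I / 2) * (M q q * M q p) := by
    intro M
    linear_combination (1 / 4 : ℂ) * (M p q - M q p) ^ 2 * Complex.I_sq
  simp only [hexp] at h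
  have hi : ∀ (c : ℂ) (i k j l : n),
      Integrable (fun w => c * (conjBy B w i k * conjBy B w j l)) μ := fun c i k j l =>
    (integrable_conjBy_mul μ B i k j l).const_mul c
  repeat rw [integral_add (by
    first
    | exact hi _ _ _ _ _
    | repeat' first | exact hi _ _ _ _ _ | refine Integrable.add ?_ ?_) (hi _ _ _ _ _)] at h
  simp only [integral_const_mul] at h
  change (1 / 4) * moment μ B p p p p + (1 / 4) * moment μ B q q q q +
    (1 / 2) * moment μ B p p q q + (1 / 2) * moment μ B p q q p +
    (-1 / 4) * moment μ B p q p q + (-1 / 4) * moment μ B q p q p +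
    (Complex.I / 2) * moment μ B p p p q + (-Complex.I / 2) * moment μ B p p q p +
    (Complex.I / 2) * moment μ B q q p q + (-Complex.I / 2) * moment μ B q q q p =
    moment μ B p p p p at h
  have hI1 : Complex.I ≠ 1 := by simp [Complex.ext_iff]
  have hI2 : -Complex.I ≠ 1 := by simp [Complex.ext_iff]
  have hI3 : (-1 : ℂ) ≠ 1 := by norm_num
  have hqp := hpq.symm
  rw [moment_eq_zero μ B p p q p q (by simp [hqp, hI3]),
    moment_eq_zero μ B p q p q p (by simp [hqp, hI3]),
    moment_eq_zero μ B p p p p q (by simp [hqp, hI1]),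
    moment_eq_zero μ B p p p q p (by simp [hqp, hI2]),
    moment_eq_zero μ B p q q p q (by simp [hqp, hI1]),
    moment_eq_zero μ B p q q q p (by simp [hqp, hI2]),
    moment_diag_const μ B q p] at h
  linear_combination 2 * h

/-- A version of `moment_add` that covers coinciding indices as well. -/
lemma moment_add' (μ : Measure (Matrix.unitaryGroup n ℂ)) [μ.IsHaarMeasure]
    [IsProbabilityMeasure μ] (B : Matrix n n ℂ) (p q r : n) :
    moment μ B p p q q + moment μ B p q q p =
      moment μ B r r r r + if p = q then moment μ B r r r r else 0 := by
  by_cases hpq : p = q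
  · subst hpq
    simp [moment_diag_const μ B p r]
  · rw [moment_add μ B hpq, moment_diag_const μ B p r, if_neg hpq, add_zero]

lemma trace_conjBy (B : Matrix n n ℂ) (w : Matrix.unitaryGroup n ℂ) :
    (conjBy B w).trace = B.trace := by
  have hw : star (w : Matrix n n ℂ) * (w : Matrix n n ℂ) = 1 :=
    Matrix.mem_unitaryGroup_iff'.mp w.2
  rw [conjBy, Matrix.trace_mul_comm, ← Matrix.mul_assoc, hw, Matrix.one_mul]

lemma trace_conjBy_mul_self (B : Matrix n n ℂ) (w : Matrix.unitaryGroup n ℂ) :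
    (conjBy B w * conjBy B w).trace = (B * B).trace := by
  have hw : star (w : Matrix n n ℂ) * (w : Matrix n n ℂ) = 1 :=
    Matrix.mem_unitaryGroup_iff'.mp w.2
  have : conjBy B w * conjBy B w = conjBy (B * B) w := by
    calc conjBy B w * conjBy B w
        = (w : Matrix n n ℂ) * B * (star (w : Matrix n n ℂ) * (w : Matrix n n ℂ)) * B *
            star (w : Matrix n n ℂ) := by simp only [conjBy, Matrix.mul_assoc]
      _ = conjBy (B * B) w := by rw [hw]; simp only [conjBy, Matrix.mul_assoc, Matrix.one_mul]
  rw [this, trace_conjBy]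

/-- The trace of the averaged `M ⊗ M` against `1 + F`, with `F` the flip of the two copies,
determines the diagonal moment. -/
lemma trace_sq_add_trace_mul_self (μ : Measure (Matrix.unitaryGroup n ℂ)) [μ.IsHaarMeasure]
    [IsProbabilityMeasure μ] (B : Matrix n n ℂ) (r : n) :
    B.trace ^ 2 + (B * B).trace =
      (Fintype.card n : ℂ) * (Fintype.card n + 1) * moment μ B r r r r := by
  have h1 : B.trace ^ 2 = ∑ p, ∑ q, moment μ B p p q q := by
    calc B.trace ^ 2 = ∫ w, (conjBy B w).trace ^ 2 ∂μ := by simp [trace_conjBy]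
      _ = ∫ w, ∑ p, ∑ q, conjBy B w p p * conjBy B w q q ∂μ := by
          simp only [Matrix.trace, Matrix.diag, sq, Finset.sum_mul_sum]
      _ = _ := by
          rw [integral_finsetSum _ fun p _ => integrable_finsetSum _ fun q _ =>
            integrable_conjBy_mul μ B _ _ _ _]
          refine Finset.sum_congr rfl fun p _ => ?_
          rw [integral_finsetSum _ fun q _ => integrable_conjBy_mul μ B _ _ _ _]
          rfl
  have h2 : (B * B).trace = ∑ p, ∑ q, moment μ B p q q p := by
    calc (B * B).trace = ∫ w, (conjBy B w * conjBy B w).trace ∂μ := by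
          simp [trace_conjBy_mul_self]
      _ = ∫ w, ∑ p, ∑ q, conjBy B w p q * conjBy B w q p ∂μ := by
          simp only [Matrix.trace, Matrix.diag, Matrix.mul_apply]
      _ = _ := by
          rw [integral_finsetSum _ fun p _ => integrable_finsetSum _ fun q _ =>
            integrable_conjBy_mul μ B _ _ _ _]
          refine Finset.sum_congr rfl fun p _ => ?_
          rw [integral_finsetSum _ fun q _ => integrable_conjBy_mul μ B _ _ _ _]
          rfl
  rw [h1, h2, ← Finset.sum_add_distrib]
  simp only [← Finset.sum_add_distrib, moment_add' μ B _ _ r]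
  simp [Finset.sum_add_distrib]
  ring

end Moments

/-! ### The averaged purity in the bipartite setting -/

section Bipartite

lemma trace_ptraceSbarDiffHbar17 {s hb b' : Type*} [Fintype s] [Fintype hb] [Fintype b']
    (A : Matrix (s × (hb × b')) (s × (hb × b')) ℂ) :
    (ptraceSbarDiffHbar17 A).trace = A.trace := by
  simp [ptraceSbarDiffHbar17, Matrix.trace, Fintype.sum_prod_type]

variable {s hb b' : Type*} [Fintype s] [Fintype hb] [Fintype b']
    [DecidableEq s] [DecidableEq hb] [DecidableEq b']

lemma ptraceSbar17_conj (w : Matrix.unitaryGroup (s × hb) ℂ)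
    (A : Matrix (s × (hb × b')) (s × (hb × b')) ℂ) (i j : s) :
    ptraceSbar17 (embedSW (w : Matrix (s × hb) (s × hb) ℂ) * A *
        embedSW (star (w : Matrix (s × hb) (s × hb) ℂ))) i j =
      ∑ x : hb, conjBy (ptraceSbarDiffHbar17 A) w (i, x) (j, x) := by
  simp only [ptraceSbar17, ptraceSbarDiffHbar17, conjBy, embedSW, Matrix.of_apply,
    Matrix.mul_apply, Fintype.sum_prod_type, mul_ite, ite_mul, mul_one, mul_zero, zero_mul,
    Finset.sum_ite_eq, Finset.sum_ite_eq', Finset.mem_univ, if_true]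
  refine Finset.sum_congr rfl fun x _ => ?_
  rw [Finset.sum_comm]
  refine Finset.sum_congr rfl fun i' _ => ?_
  rw [Finset.sum_comm]
  refine Finset.sum_congr rfl fun x' _ => ?_
  rw [← Finset.sum_mul]
  congr 1
  rw [Finset.sum_comm]
  refine Finset.sum_congr rfl fun i'' _ => ?_
  rw [Finset.sum_comm]
  refine Finset.sum_congr rfl fun x'' _ => ?_
  rw [← Finset.mul_sum]

/-- Phase invariance leaves only the moments with `i = j` or `x = y` in the purity; the last
term corrects for counting the case `i = j`, `x = y` twice. -/
lemma moment_purity_term (μ : Measure (Matrix.unitaryGroup (s × hb) ℂ)) [μ.IsHaarMeasure]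
    (B : Matrix (s × hb) (s × hb) ℂ) (r : s × hb) (i j : s) (x y : hb) :
    moment μ B (i, x) (j, x) (j, y) (i, y) =
      (if i = j then moment μ B (i, x) (i, x) (i, y) (i, y) else 0) +
      (if x = y then moment μ B (i, x) (j, x) (j, x) (i, x) else 0) -
      (if i = j then if x = y then moment μ B r r r r else 0 else 0) := by
  by_cases hij : i = j
  · subst hij
    by_cases hxy : x = y
    · subst hxy
      simp [moment_diag_const μ B (i, x) r]
    · simp [hxy]
  · by_cases hxy : x = y
    · subst hxy
      simp [hij]
    · have hI1 : Complex.I ≠ 1 := by simp [Complex.ext_iff]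
      rw [moment_eq_zero μ B (i, x) _ _ _ _ (by
        simp [Ne.symm hij, Ne.symm hxy, hI1])]
      simp [hij, hxy]

/-- Exchanging the roles of the two factors, which have equal dimension, turns the sum of
moments over pairs with a common first coordinate into that over pairs with a common second
coordinate. -/
lemma sum_moment_exchange (μ : Measure (Matrix.unitaryGroup (s × hb) ℂ)) [μ.IsHaarMeasure]
    (B : Matrix (s × hb) (s × hb) ℂ) (e : s ≃ hb) :
    ∑ i : s, ∑ x : hb, ∑ y : hb, moment μ B (i, x) (i, x) (i, y) (i, y) =
      ∑ i : s, ∑ j : s, ∑ x : hb, moment μ B (i, x) (i, x) (j, x) (j, x) := by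
  let τ : Equiv.Perm (s × hb) := (Equiv.prodCongr e e.symm).trans (Equiv.prodComm hb s)
  have hτ : ∀ i x, τ (i, x) = (e.symm x, e i) := fun i x => rfl
  calc ∑ i : s, ∑ x : hb, ∑ y : hb, moment μ B (i, x) (i, x) (i, y) (i, y)
      = ∑ i : s, ∑ x : hb, ∑ y : hb,
          moment μ B (e.symm x, e i) (e.symm x, e i) (e.symm y, e i) (e.symm y, e i) := by
        simp only [← hτ, moment_perm]
    _ = ∑ x : hb, ∑ i : s, ∑ j : s, moment μ B (i, x) (i, x) (j, x) (j, x) := by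
        rw [← e.sum_comp]
        refine Finset.sum_congr rfl fun i _ => ?_
        rw [← e.sum_comp]
        refine Finset.sum_congr rfl fun j _ => ?_
        rw [← e.sum_comp]
        simp
    _ = _ := by
        rw [Finset.sum_comm]
        exact Finset.sum_congr rfl fun i _ => Finset.sum_comm

lemma sum_moment_purity (μ : Measure (Matrix.unitaryGroup (s × hb) ℂ)) [μ.IsHaarMeasure]
    [IsProbabilityMeasure μ] (B : Matrix (s × hb) (s × hb) ℂ) (e : s ≃ hb) (r : s × hb) :
    ∑ i : s, ∑ j : s, ∑ x : hb, ∑ y : hb, moment μ B (i, x) (j, x) (j, y) (i, y) =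
      (Fintype.card s : ℂ) ^ 2 * Fintype.card hb * moment μ B r r r r := by
  have h1 : ∑ i : s, ∑ j : s, ∑ x : hb, ∑ y : hb, moment μ B (i, x) (j, x) (j, y) (i, y) =
      (∑ i : s, ∑ x : hb, ∑ y : hb, moment μ B (i, x) (i, x) (i, y) (i, y)) +
      (∑ i : s, ∑ j : s, ∑ x : hb, moment μ B (i, x) (j, x) (j, x) (i, x)) -
      (Fintype.card s : ℂ) * Fintype.card hb * moment μ B r r r r := by
    refine (Finset.sum_congr rfl fun i _ => Finset.sum_congr rfl fun j _ =>
      Finset.sum_congr rfl fun x _ => Finset.sum_congr rfl fun y _ =>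
        moment_purity_term μ B r i j x y).trans ?_
    simp only [Finset.sum_add_distrib, Finset.sum_sub_distrib]
    congr 1
    · congr 1
      · refine Finset.sum_congr rfl fun i _ => ?_
        rw [Finset.sum_comm]
        refine Finset.sum_congr rfl fun x _ => ?_
        rw [Finset.sum_comm]
        simp
      · simp
    · simp [mul_assoc]
  rw [h1, sum_moment_exchange μ B e]
  simp only [← Finset.sum_add_distrib, moment_add' μ B _ _ r]
  simp [Finset.sum_add_distrib]
  ring

end Bipartite

/-- With `dim H_S = D`, `S_h̄ ⊆ S̄` a tensor factor of dimension `D`,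
and `S_w = S ⊗ S_h̄` of dimension `d = D²`, for `μ` the normalized Haar probability
measure on `U(d)` and any operator `A` on `H`:
`∫ Tr[(Tr_{S̄}[w̃ A w̃†])²] dμ(w) = (D/(D² + 1))·(Tr[A]² + Tr[(Tr_{S̄ ∖ S_h̄}[A])²])`. -/
theorem haar_edge_block_average_purity
    (D : ℕ) (s hb b' : Type*) [Fintype s] [Fintype hb] [Fintype b']
    [DecidableEq s] [DecidableEq hb] [DecidableEq b']
    (hDs : Fintype.card s = D) (hDhb : Fintype.card hb = D)
    (μ : Measure (Matrix.unitaryGroup (s × hb) ℂ))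
    [μ.IsHaarMeasure] [IsProbabilityMeasure μ]
    (A : Matrix (s × (hb × b')) (s × (hb × b')) ℂ) :
    ∫ w : Matrix.unitaryGroup (s × hb) ℂ,
        (ptraceSbar17 (embedSW (w : Matrix (s × hb) (s × hb) ℂ) * A *
            embedSW (star (w : Matrix (s × hb) (s × hb) ℂ))) *
          ptraceSbar17 (embedSW (w : Matrix (s × hb) (s × hb) ℂ) * A *
            embedSW (star (w : Matrix (s × hb) (s × hb) ℂ)))).trace ∂μ
      = ((D : ℂ) / ((D : ℂ) ^ 2 + 1)) *
          (A.trace ^ 2 + (ptraceSbarDiffHbar17 A * ptraceSbarDiffHbar17 A).trace) := by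
  set B := ptraceSbarDiffHbar17 A with hB
  have hL : ∫ w : Matrix.unitaryGroup (s × hb) ℂ,
        (ptraceSbar17 (embedSW (w : Matrix (s × hb) (s × hb) ℂ) * A *
            embedSW (star (w : Matrix (s × hb) (s × hb) ℂ))) *
          ptraceSbar17 (embedSW (w : Matrix (s × hb) (s × hb) ℂ) * A *
            embedSW (star (w : Matrix (s × hb) (s × hb) ℂ)))).trace ∂μ
      = ∑ i : s, ∑ j : s, ∑ x : hb, ∑ y : hb, moment μ B (i, x) (j, x) (j, y) (i, y) := by
    simp only [Matrix.trace, Matrix.diag, Matrix.mul_apply (M := ptraceSbar17 _),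
      ptraceSbar17_conj, Finset.sum_mul_sum, ← hB]
    have hi := integrable_conjBy_mul μ B
    rw [integral_finsetSum _ fun i _ => integrable_finsetSum _ fun j _ =>
      integrable_finsetSum _ fun x _ => integrable_finsetSum _ fun y _ => hi _ _ _ _]
    refine Finset.sum_congr rfl fun i _ => ?_
    rw [integral_finsetSum _ fun j _ => integrable_finsetSum _ fun x _ =>
      integrable_finsetSum _ fun y _ => hi _ _ _ _]
    refine Finset.sum_congr rfl fun j _ => ?_
    rw [integral_finsetSum _ fun x _ => integrable_finsetSum _ fun y _ => hi _ _ _ _]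
    refine Finset.sum_congr rfl fun x _ => ?_
    rw [integral_finsetSum _ fun y _ => hi _ _ _ _]
    rfl
  have e : s ≃ hb := Fintype.equivOfCardEq (hDs.trans hDhb.symm)
  rw [hL, ← trace_ptraceSbarDiffHbar17 A, ← hB]
  rcases isEmpty_or_nonempty s with hs | ⟨⟨i₀⟩⟩
  · have hD : D = 0 := by rw [← hDs, Fintype.card_eq_zero]
    simp [hD]
  · let r : s × hb := (i₀, e i₀)
    have hD : ((D : ℂ) ^ 2 + 1) ≠ 0 := by
      have : ((D ^ 2 + 1 : ℕ) : ℂ) ≠ 0 := Nat.cast_ne_zero.mpr (Nat.succ_ne_zero _)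
      exact_mod_cast this
    rw [sum_moment_purity μ B e r, trace_sq_add_trace_mul_self μ B r, Fintype.card_prod,
      hDs, hDhb]
    push_cast
    field_simp
end

section
/- Consider an n-qubit system with two disjoint subsets of m qubits S_W and S_{W′}, and subsets S_κ ⊆ S_W of n_κ qubits and S_{κ′} ⊆ S_{W′} of n_{κ′} qubits. Let W_A, W_B, W′_A, W′_B be four independent random unitaries, each Haar distributed on U(2^m), where W_A, W′_A act on S_W and W_B, W′_B act on S_{W′} (extended by the identity elsewhere). For density matrices ρ, ρ′ on n qubits, define the random states σ = (W̃_A W̃_B) ρ (W̃_A W̃_B)† and σ′ = (W̃′_A W̃′_B) ρ′ (W̃′_A W̃′_B)†, and the random variables k^{(κ)} = Tr[Tr_{S̄_κ}[σ]·Tr_{S̄_κ}[σ′]] and k^{(κ′)} = Tr[Tr_{S̄_{κ′}}[σ]·Tr_{S̄_{κ′}}[σ′]]. Then Cov[k^{(κ)}, k^{(κ′)}] = 0. -/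
/-!
Conjugating by a unitary supported on a set of qubits disjoint from `S` does not change the
partial trace onto `S` (`ptraceCompl_conj`): entries of the partial trace are the numbers
`Tr[M (E ⊗ 1)]` with `E` a matrix unit on `S` (`ptraceCompl_eq_trace`), and operators with disjoint
supports commute (`embedQ_comm`).  Hence the kernel on `S_κ ⊆ S_W` depends only on the two unitaries
acting on `S_W`, and the kernel on `S_κ'` only on the two unitaries acting on `S_W'`.  These pairs
are independent, so the covariance vanishes (`covar_prod_eq_zero`).
-/


open MeasureTheory Matrix ComplexOrder

/-- Covariance of two real random variables with respect to a measure. -/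
noncomputable def covar {Ω : Type*} [MeasurableSpace Ω] (f g : Ω → ℝ) (μ : Measure Ω) : ℝ :=
  ∫ x, (f x - ∫ y, f y ∂μ) * (g x - ∫ y, g y ∂μ) ∂μ

/-- `mergeQ` as a bijection; the inverse restricts a basis state to `S` and to its complement. -/
def mergeEquiv {n : ℕ} (S : Finset (Fin n)) :
    (({i : Fin n // i ∈ S} → Fin 2) × ({i : Fin n // i ∉ S} → Fin 2)) ≃ QubitBasis n where
  toFun p := mergeQ S p.1 p.2
  invFun x := (fun i => x i.1, fun i => x i.1)
  left_inv p := by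
    ext i
    · simp [mergeQ, i.2]
    · simp [mergeQ, i.2]
  right_inv x := by
    ext i
    simp [mergeQ]

theorem mergeQ_on {n : ℕ} (S : Finset (Fin n)) (a : {i : Fin n // i ∈ S} → Fin 2)
    (c : {i : Fin n // i ∉ S} → Fin 2) :
    (fun i : {i : Fin n // i ∈ S} => mergeQ S a c i.1) = a := by
  ext i
  simp [mergeQ, i.2]

theorem mergeQ_off {n : ℕ} (S : Finset (Fin n)) (a : {i : Fin n // i ∈ S} → Fin 2)
    (c : {i : Fin n // i ∉ S} → Fin 2) (i : {i : Fin n // i ∉ S}) :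
    mergeQ S a c i.1 = c i := by
  simp [mergeQ, i.2]

theorem sum_mergeQ {n : ℕ} (S : Finset (Fin n)) (f : QubitBasis n → ℂ) :
    ∑ x, f x = ∑ a, ∑ c, f (mergeQ S a c) := by
  rw [← (mergeEquiv S).sum_comp, Fintype.sum_prod_type]
  rfl

theorem embedQ_merge {n : ℕ} (S : Finset (Fin n))
    (W : Matrix ({i : Fin n // i ∈ S} → Fin 2) ({i : Fin n // i ∈ S} → Fin 2) ℂ)
    (a b : {i : Fin n // i ∈ S} → Fin 2) (c d : {i : Fin n // i ∉ S} → Fin 2) :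
    embedQ S W (mergeQ S a c) (mergeQ S b d) = if c = d then W a b else 0 := by
  simp only [embedQ, Matrix.of_apply, mergeQ_on, mergeQ_off, ← funext_iff]
  split_ifs <;> simp

theorem embedQ_mul {n : ℕ} (S : Finset (Fin n))
    (V W : Matrix ({i : Fin n // i ∈ S} → Fin 2) ({i : Fin n // i ∈ S} → Fin 2) ℂ) :
    embedQ S V * embedQ S W = embedQ S (V * W) := by
  ext x y
  obtain ⟨⟨a, c⟩, rfl⟩ := (mergeEquiv S).surjective x
  obtain ⟨⟨b, d⟩, rfl⟩ := (mergeEquiv S).surjective y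
  change (embedQ S V * embedQ S W) (mergeQ S a c) (mergeQ S b d)
    = embedQ S (V * W) (mergeQ S a c) (mergeQ S b d)
  rw [Matrix.mul_apply, sum_mergeQ S]
  simp only [embedQ_merge, Matrix.mul_apply]
  by_cases h : c = d <;> simp [h]

theorem embedQ_one {n : ℕ} (S : Finset (Fin n)) : embedQ S 1 = 1 := by
  ext x y
  obtain ⟨⟨a, c⟩, rfl⟩ := (mergeEquiv S).surjective x
  obtain ⟨⟨b, d⟩, rfl⟩ := (mergeEquiv S).surjective y
  have h : mergeQ S a c = mergeQ S b d ↔ a = b ∧ c = d :=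
    (mergeEquiv S).injective.eq_iff.trans Prod.mk_inj
  change embedQ S 1 (mergeQ S a c) (mergeQ S b d) = (1 : Matrix _ _ ℂ) (mergeQ S a c) (mergeQ S b d)
  simp only [embedQ_merge, Matrix.one_apply, h]
  split_ifs <;> simp_all

theorem embedQ_star {n : ℕ} (S : Finset (Fin n))
    (W : Matrix ({i : Fin n // i ∈ S} → Fin 2) ({i : Fin n // i ∈ S} → Fin 2) ℂ) :
    star (embedQ S W) = embedQ S (star W) := by
  ext x y
  simp only [Matrix.star_apply, embedQ, Matrix.of_apply, star_mul', eq_comm]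
  split_ifs <;> simp

/-- Entries of a product of operators with disjoint supports: the only intermediate basis state
that contributes agrees with `y` on `S` and with `x` elsewhere. -/
theorem embedQ_mul_disjoint {n : ℕ} {S T : Finset (Fin n)} (h : Disjoint S T)
    (V : Matrix ({i : Fin n // i ∈ S} → Fin 2) ({i : Fin n // i ∈ S} → Fin 2) ℂ)
    (W : Matrix ({i : Fin n // i ∈ T} → Fin 2) ({i : Fin n // i ∈ T} → Fin 2) ℂ)
    (x y : QubitBasis n) :
    (embedQ S V * embedQ T W) x y =
      (if ∀ i, i ∉ S → i ∉ T → x i = y i then (1 : ℂ) else 0) *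
        (V (fun i => x i.1) (fun i => y i.1) * W (fun i => x i.1) (fun i => y i.1)) := by
  have hST : ∀ i, i ∈ S → i ∉ T := fun i hi hT => (Finset.disjoint_left.mp h hi) hT
  rw [Matrix.mul_apply,
    Finset.sum_eq_single (fun i => if i ∈ S then y i else x i : QubitBasis n)]
  · have h1 : (fun i : {i : Fin n // i ∈ S} => if i.1 ∈ S then y i.1 else x i.1)
        = fun i => y i.1 := by
      ext i; simp [i.2]
    have h2 : (fun i : {i : Fin n // i ∈ T} => if i.1 ∈ S then y i.1 else x i.1)
        = fun i => x i.1 := by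
      ext i
      have : i.1 ∉ S := fun hi => hST _ hi i.2
      simp [this]
    have h3 : ∀ i : {i : Fin n // i ∉ S}, x i.1 = if i.1 ∈ S then y i.1 else x i.1 := by
      intro i; simp [i.2]
    have h4 : (∀ i : {i : Fin n // i ∉ T}, (if i.1 ∈ S then y i.1 else x i.1) = y i.1) ↔
        ∀ i, i ∉ S → i ∉ T → x i = y i := by
      constructor
      · intro H i hS hT
        simpa [hS] using H ⟨i, hT⟩
      · intro H i
        by_cases hS : i.1 ∈ S
        · simp [hS]
        · simpa [hS] using H i.1 hS i.2
    simp only [embedQ, Matrix.of_apply, h1, h2, h4, if_pos h3]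
    ring
  · intro z _ hz
    simp only [embedQ, Matrix.of_apply]
    by_cases c1 : ∀ i : {i : Fin n // i ∉ S}, x i.1 = z i.1
    · by_cases c2 : ∀ i : {i : Fin n // i ∉ T}, z i.1 = y i.1
      · refine absurd ?_ hz
        ext1 i
        by_cases hS : i ∈ S
        · simpa [hS] using c2 ⟨i, hST i hS⟩
        · simpa [hS] using (c1 ⟨i, hS⟩).symm
      · rw [if_neg c2, zero_mul, mul_zero]
    · rw [if_neg c1, zero_mul, zero_mul]
  · simp

theorem embedQ_comm {n : ℕ} {S T : Finset (Fin n)} (h : Disjoint S T)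
    (V : Matrix ({i : Fin n // i ∈ S} → Fin 2) ({i : Fin n // i ∈ S} → Fin 2) ℂ)
    (W : Matrix ({i : Fin n // i ∈ T} → Fin 2) ({i : Fin n // i ∈ T} → Fin 2) ℂ) :
    embedQ S V * embedQ T W = embedQ T W * embedQ S V := by
  ext x y
  rw [embedQ_mul_disjoint h, embedQ_mul_disjoint h.symm, mul_comm (V _ _)]
  congr 2
  exact propext ⟨fun H i hT hS => H i hS hT, fun H i hS hT => H i hT hS⟩

theorem ptraceCompl_eq_trace {n : ℕ} (S : Finset (Fin n))
    (M : Matrix (QubitBasis n) (QubitBasis n) ℂ) (a b : {i : Fin n // i ∈ S} → Fin 2) :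
    ptraceCompl S M a b = (M * embedQ S (Matrix.single b a 1)).trace := by
  simp only [Matrix.trace, Matrix.diag, Matrix.mul_apply]
  rw [sum_mergeQ S]
  simp_rw [sum_mergeQ S (fun j => M _ j * _), embedQ_merge, Matrix.single_apply]
  rw [Finset.sum_eq_single a]
  · simp only [ptraceCompl, Matrix.of_apply, and_true]
    refine Finset.sum_congr rfl fun c _ => ?_
    rw [Finset.sum_eq_single b]
    · simp
    · intro b' _ hb
      simp [hb.symm]
    · simp
  · intro a' _ ha
    simp [ha.symm]
  · simp

theorem ptraceCompl_conj {n : ℕ} {S T : Finset (Fin n)} (h : Disjoint S T)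
    (U : Matrix.unitaryGroup ({i : Fin n // i ∈ T} → Fin 2) ℂ)
    (M : Matrix (QubitBasis n) (QubitBasis n) ℂ) :
    ptraceCompl S (embedQ T (U : Matrix _ _ ℂ) * M * star (embedQ T (U : Matrix _ _ ℂ)))
      = ptraceCompl S M := by
  ext a b
  have hU : star (embedQ T (U : Matrix _ _ ℂ)) * embedQ T (U : Matrix _ _ ℂ) = 1 := by
    rw [embedQ_star, embedQ_mul, Matrix.UnitaryGroup.star_mul_self, embedQ_one]
  rw [ptraceCompl_eq_trace, ptraceCompl_eq_trace, Matrix.mul_assoc, Matrix.mul_assoc,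
    Matrix.trace_mul_comm, Matrix.mul_assoc, Matrix.mul_assoc, embedQ_comm h,
    ← Matrix.mul_assoc (star _), hU, Matrix.one_mul]

/-- Random variables depending on complementary halves of two independent pairs are uncorrelated.
No integrability is needed: for a non-integrable function the integral is `0`, so centring still
yields integral `0`. -/
theorem covar_prod_eq_zero {α β : Type*} [MeasurableSpace α] [MeasurableSpace β]
    (μ : Measure α) (ν : Measure β) [IsProbabilityMeasure μ] [IsProbabilityMeasure ν]
    (F : α × α → ℝ) (G : β × β → ℝ) :
    covar (fun x : (α × β) × (α × β) => F (x.1.1, x.2.1))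
      (fun x : (α × β) × (α × β) => G (x.1.2, x.2.2)) ((μ.prod ν).prod (μ.prod ν)) = 0 := by
  let e : (α × β) × (α × β) ≃ᵐ (α × α) × (β × β) :=
    { Equiv.prodProdProdComm α β α β with
      measurable_toFun := by
        change Measurable fun x : (α × β) × (α × β) => ((x.1.1, x.2.1), (x.1.2, x.2.2))
        fun_prop
      measurable_invFun := by
        change Measurable fun x : (α × α) × (β × β) => ((x.1.1, x.2.1), (x.1.2, x.2.2))
        fun_prop }
  have he : MeasurePreserving e ((μ.prod ν).prod (μ.prod ν)) ((μ.prod μ).prod (ν.prod ν)) := by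
    let φ : (β × (α × β)) → (α × (β × β)) := fun y => (y.2.1, (y.1, y.2.2))
    have hφ : MeasurePreserving φ (ν.prod (μ.prod ν)) (μ.prod (ν.prod ν)) :=
      (measurePreserving_prodAssoc μ ν ν).comp
        ((Measure.measurePreserving_swap.prod (MeasurePreserving.id ν)).comp
          ((measurePreserving_prodAssoc ν μ ν).symm))
    exact ((measurePreserving_prodAssoc μ μ (ν.prod ν)).symm).comp
      (((MeasurePreserving.id μ).prod hφ).comp (measurePreserving_prodAssoc μ ν (μ.prod ν)))
  have key : ∀ (f : α × α → ℝ) (g : β × β → ℝ),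
      ∫ x : (α × β) × (α × β), f (x.1.1, x.2.1) * g (x.1.2, x.2.2)
        ∂((μ.prod ν).prod (μ.prod ν)) = (∫ p, f p ∂(μ.prod μ)) * ∫ q, g q ∂(ν.prod ν) := by
    intro f g
    rw [← integral_prod_mul, ← he.integral_comp e.measurableEmbedding]
    rfl
  have hF : ∫ x : (α × β) × (α × β), F (x.1.1, x.2.1) ∂((μ.prod ν).prod (μ.prod ν))
      = ∫ p, F p ∂(μ.prod μ) := by
    simpa using key F (fun _ => 1)
  have h0 : ∫ p, (F p - ∫ p, F p ∂(μ.prod μ)) ∂(μ.prod μ) = 0 := by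
    by_cases hi : Integrable F (μ.prod μ)
    · rw [integral_sub hi (integrable_const _)]
      simp
    · simp [integral_undef hi]
  rw [covar, hF, key (fun p => F p - ∫ p, F p ∂(μ.prod μ)) (fun q => G q - _), h0, zero_mul]

/-- Disjoint `m`-qubit subsets `S_W`, `S_{W'}` with `S_κ ⊆ S_W`,
`S_{κ'} ⊆ S_{W'}`; four independent Haar random block unitaries (modeled by the product
measure `(μA.prod μB).prod (μA.prod μB)`), acting on `S_W`, `S_{W'}` respectively, with
density matrices `ρ`, `ρ′`.  For `σ = (W̃_A W̃_B) ρ (W̃_A W̃_B)†`,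
`σ′ = (W̃′_A W̃′_B) ρ′ (W̃′_A W̃′_B)†`, `k^{(κ)} = Tr[Tr_{S̄_κ}[σ]·Tr_{S̄_κ}[σ′]]` and
`k^{(κ′)} = Tr[Tr_{S̄_{κ'}}[σ]·Tr_{S̄_{κ'}}[σ′]]`, we have `Cov[k^{(κ)}, k^{(κ′)}] = 0`. -/
theorem cov_projected_kernels_disjoint_blocks
    (n m nκ nκ' : ℕ) (SW SW' Sκ Sκ' : Finset (Fin n))
    (hdis : Disjoint SW SW') (hm : SW.card = m) (hm' : SW'.card = m)
    (hκW : Sκ ⊆ SW) (hκ : Sκ.card = nκ) (hκW' : Sκ' ⊆ SW') (hκ' : Sκ'.card = nκ')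
    (μA : Measure (Matrix.unitaryGroup ({i : Fin n // i ∈ SW} → Fin 2) ℂ))
    [μA.IsHaarMeasure] [IsProbabilityMeasure μA]
    (μB : Measure (Matrix.unitaryGroup ({i : Fin n // i ∈ SW'} → Fin 2) ℂ))
    [μB.IsHaarMeasure] [IsProbabilityMeasure μB]
    (ρ ρ' : Matrix (QubitBasis n) (QubitBasis n) ℂ)
    (hρ : ρ.PosSemidef) (hρt : ρ.trace = 1)
    (hρ' : ρ'.PosSemidef) (hρt' : ρ'.trace = 1) :
    covar
      (fun x : (Matrix.unitaryGroup ({i : Fin n // i ∈ SW} → Fin 2) ℂ ×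
            Matrix.unitaryGroup ({i : Fin n // i ∈ SW'} → Fin 2) ℂ) ×
          (Matrix.unitaryGroup ({i : Fin n // i ∈ SW} → Fin 2) ℂ ×
            Matrix.unitaryGroup ({i : Fin n // i ∈ SW'} → Fin 2) ℂ) =>
        ((ptraceCompl Sκ
            ((embedQ SW (x.1.1 : Matrix _ _ ℂ) * embedQ SW' (x.1.2 : Matrix _ _ ℂ)) * ρ *
              star (embedQ SW (x.1.1 : Matrix _ _ ℂ) * embedQ SW' (x.1.2 : Matrix _ _ ℂ))) *
          ptraceCompl Sκ
            ((embedQ SW (x.2.1 : Matrix _ _ ℂ) * embedQ SW' (x.2.2 : Matrix _ _ ℂ)) * ρ' *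
              star (embedQ SW (x.2.1 : Matrix _ _ ℂ) *
                embedQ SW' (x.2.2 : Matrix _ _ ℂ)))).trace).re)
      (fun x : (Matrix.unitaryGroup ({i : Fin n // i ∈ SW} → Fin 2) ℂ ×
            Matrix.unitaryGroup ({i : Fin n // i ∈ SW'} → Fin 2) ℂ) ×
          (Matrix.unitaryGroup ({i : Fin n // i ∈ SW} → Fin 2) ℂ ×
            Matrix.unitaryGroup ({i : Fin n // i ∈ SW'} → Fin 2) ℂ) =>
        ((ptraceCompl Sκ'
            ((embedQ SW (x.1.1 : Matrix _ _ ℂ) * embedQ SW' (x.1.2 : Matrix _ _ ℂ)) * ρ *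
              star (embedQ SW (x.1.1 : Matrix _ _ ℂ) * embedQ SW' (x.1.2 : Matrix _ _ ℂ))) *
          ptraceCompl Sκ'
            ((embedQ SW (x.2.1 : Matrix _ _ ℂ) * embedQ SW' (x.2.2 : Matrix _ _ ℂ)) * ρ' *
              star (embedQ SW (x.2.1 : Matrix _ _ ℂ) *
                embedQ SW' (x.2.2 : Matrix _ _ ℂ)))).trace).re)
      ((μA.prod μB).prod (μA.prod μB))
      = 0 := by
  have hκdis : Disjoint Sκ SW' := Finset.disjoint_of_subset_left hκW hdis
  have hκdis' : Disjoint Sκ' SW := Finset.disjoint_of_subset_left hκW' hdis.symm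
  have h1 : ∀ (U : Matrix.unitaryGroup ({i : Fin n // i ∈ SW} → Fin 2) ℂ)
      (V : Matrix.unitaryGroup ({i : Fin n // i ∈ SW'} → Fin 2) ℂ)
      (M : Matrix (QubitBasis n) (QubitBasis n) ℂ),
      ptraceCompl Sκ ((embedQ SW (U : Matrix _ _ ℂ) * embedQ SW' (V : Matrix _ _ ℂ)) * M *
        star (embedQ SW (U : Matrix _ _ ℂ) * embedQ SW' (V : Matrix _ _ ℂ)))
      = ptraceCompl Sκ (embedQ SW (U : Matrix _ _ ℂ) * M * star (embedQ SW (U : Matrix _ _ ℂ))) := by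
    intro U V M
    rw [embedQ_comm hdis, star_mul,
      ← ptraceCompl_conj hκdis V (embedQ SW (U : Matrix _ _ ℂ) * M * _)]
    simp only [Matrix.mul_assoc]
  have h2 : ∀ (U : Matrix.unitaryGroup ({i : Fin n // i ∈ SW} → Fin 2) ℂ)
      (V : Matrix.unitaryGroup ({i : Fin n // i ∈ SW'} → Fin 2) ℂ)
      (M : Matrix (QubitBasis n) (QubitBasis n) ℂ),
      ptraceCompl Sκ' ((embedQ SW (U : Matrix _ _ ℂ) * embedQ SW' (V : Matrix _ _ ℂ)) * M *
        star (embedQ SW (U : Matrix _ _ ℂ) * embedQ SW' (V : Matrix _ _ ℂ)))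
      = ptraceCompl Sκ' (embedQ SW' (V : Matrix _ _ ℂ) * M *
          star (embedQ SW' (V : Matrix _ _ ℂ))) := by
    intro U V M
    rw [star_mul,
      ← ptraceCompl_conj hκdis' U (embedQ SW' (V : Matrix _ _ ℂ) * M * _)]
    simp only [Matrix.mul_assoc]
  simp only [h1, h2]
  exact covar_prod_eq_zero μA μB
    (fun p => ((ptraceCompl Sκ (embedQ SW (p.1 : Matrix _ _ ℂ) * ρ *
        star (embedQ SW (p.1 : Matrix _ _ ℂ))) *
      ptraceCompl Sκ (embedQ SW (p.2 : Matrix _ _ ℂ) * ρ' *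
        star (embedQ SW (p.2 : Matrix _ _ ℂ)))).trace).re)
    (fun q => ((ptraceCompl Sκ' (embedQ SW' (q.1 : Matrix _ _ ℂ) * ρ *
        star (embedQ SW' (q.1 : Matrix _ _ ℂ))) *
      ptraceCompl Sκ' (embedQ SW' (q.2 : Matrix _ _ ℂ) * ρ' *
        star (embedQ SW' (q.2 : Matrix _ _ ℂ)))).trace).re)
end
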